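/- arXiv:2601.15639 — 9 statements merged into one kernel-verified Lean document; each statement's English description precedes it below -/
import Mathlib

section
/- Let f : [0,∞) → ℝ be convex with f(1) = 0, and suppose the limit L = lim_{t→∞} f(t)/t exists in ℝ. Then for every finite set 𝒳 and all probability mass functions p, q on 𝒳 with p ≪ q, the f-divergence satisfies D_f(p‖q) ≤ f(0) + L. -/
open scoped BigOperators

/-- A probability mass function on a finite type: nonnegative and summing to 1. -/
def IsPMF {X : Type*} [Fintype X] (p : X → ℝ) : Prop :=
  (∀ x, 0 ≤ p x) ∧ ∑ x, p x = 1

/-- Absolute continuity `p ≪ q`: `q x = 0` implies `p x = 0`. -/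
def AbsCont {X : Type*} (p q : X → ℝ) : Prop :=
  ∀ x, q x = 0 → p x = 0

/-- The f-divergence `D_f(p‖q) = ∑_{x : q(x) > 0} q(x) f(p(x)/q(x))`. -/
noncomputable def fDiv {X : Type*} [Fintype X] (f : ℝ → ℝ) (p q : X → ℝ) : ℝ :=
  ∑ x, if 0 < q x then q x * f (p x / q x) else 0

/-- If `f` is convex on `[0,∞)` with `f 1 = 0` and `f t / t → L` as `t → ∞`,
then `D_f(p‖q) ≤ f 0 + L` for all pmfs `p ≪ q` on a finite alphabet. -/
theorem fDiv_le_Dm (f : ℝ → ℝ) (L : ℝ)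
    (hconv : ConvexOn ℝ (Set.Ici 0) f) (hf1 : f 1 = 0)
    (hlim : Filter.Tendsto (fun t : ℝ => f t / t) Filter.atTop (nhds L)) :
    ∀ (𝒳 : Type) [Fintype 𝒳] (p q : 𝒳 → ℝ),
      IsPMF p → IsPMF q → AbsCont p q → fDiv f p q ≤ f 0 + L := by
  have key : ∀ t : ℝ, 0 ≤ t → f t ≤ f 0 + t * L := by
    intro t ht
    have h0 : Filter.Tendsto (fun s : ℝ => t / s) Filter.atTop (nhds 0) :=
      Filter.Tendsto.div_atTop tendsto_const_nhds Filter.tendsto_id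
    have h1 : Filter.Tendsto (fun s : ℝ => (1 - t / s) * f 0 + t * (f s / s))
        Filter.atTop (nhds ((1 - 0) * f 0 + t * L)) :=
      ((tendsto_const_nhds.sub h0).mul_const _).add (hlim.const_mul t)
    have h2 : f t ≤ (1 - 0) * f 0 + t * L := by
      refine ge_of_tendsto h1 ?_
      filter_upwards [Filter.eventually_ge_atTop t, Filter.eventually_gt_atTop 0] with s hs hs0
      have ha : 0 ≤ 1 - t / s := by
        have := (div_le_one hs0).2 hs
        linarith
      have hb : 0 ≤ t / s := by positivity
      have hm : (0 : ℝ) ∈ Set.Ici (0 : ℝ) := by simp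
      have hm2 : s ∈ Set.Ici (0 : ℝ) := hs0.le
      have h3 := hconv.2 hm hm2 ha hb (by ring)
      simp only [smul_eq_mul, mul_zero, zero_add] at h3
      rw [div_mul_cancel₀ _ hs0.ne'] at h3
      calc f t ≤ _ := h3
        _ = _ := by ring
    linarith
  intro X _ p q hp hq hpq
  have hb : fDiv f p q ≤ ∑ x, (q x * f 0 + p x * L) := by
    unfold fDiv
    refine Finset.sum_le_sum fun x _ => ?_
    split_ifs with h
    · have h4 := mul_le_mul_of_nonneg_left (key (p x / q x) (div_nonneg (hp.1 x) h.le)) h.le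
      have h5 : q x * (f 0 + p x / q x * L) = q x * f 0 + p x * L := by
        field_simp
      linarith
    · have hq0 : q x = 0 := le_antisymm (not_lt.1 h) (hq.1 x)
      simp [hq0, hpq x hq0]
  rw [Finset.sum_add_distrib, ← Finset.sum_mul, ← Finset.sum_mul, hp.2, hq.2] at hb
  linarith
end

section
/- Let (G,f) be an admissible pair and let X, Y, Z be finite sets. Let p_X be a pmf on X, let p_{Y|X} be a channel from X to Y, and let p_{Z|Y} be a channel from Y to Z, so that X → Y → Z forms a Markov chain; define the induced channel p_{Z|X}(z|x) = ∑_y p_{Y|X}(y|x) p_{Z|Y}(z|y). Then the data processing inequality I_{G,f}(p_X, p_{Y|X}) ≥ I_{G,f}(p_X, p_{Z|X}) holds. -/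
open scoped BigOperators

/-- `D_m(f) = f 0 + lim_{t→∞} f t / t`, as an extended real.  For a convex `f`
with `f 1 = 0` the limit equals the supremum of the slopes `f t / (t-1)` over `t > 1`. -/
noncomputable def Dm (f : ℝ → ℝ) : EReal :=
  (f 0 : EReal) + ⨆ t : {t : ℝ // 1 < t}, ((f t.1 / (t.1 - 1) : ℝ) : EReal)

/-- An admissible pair `(G, f)`: `f` is convex on `[0,∞)` with `f 1 = 0`, and
`G : [0, D_m(f)) → [0,∞)` is non-decreasing with `G 0 = 0`. -/
def Admissible (G f : ℝ → ℝ) : Prop :=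
  ConvexOn ℝ (Set.Ici 0) f ∧ f 1 = 0 ∧ G 0 = 0 ∧
    (∀ a b : ℝ, 0 ≤ a → a ≤ b → (b : EReal) < Dm f → G a ≤ G b) ∧
    (∀ a : ℝ, 0 ≤ a → (a : EReal) < Dm f → 0 ≤ G a)

/-- The `(G,f)`-information `I_{G,f}(p_X, p_{Y|X})`: the infimum over output pmfs
`q_Y` (with `p_{Y|X=x} ≪ q_Y` for all `x`) of `∑_x p_X x • G (D_f(p_{Y|X=x}‖q_Y))`. -/
noncomputable def Igf {X Y : Type*} [Fintype X] [Fintype Y]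
    (G f : ℝ → ℝ) (pX : X → ℝ) (W : X → Y → ℝ) : ℝ :=
  sInf {v : ℝ | ∃ qY : Y → ℝ, IsPMF qY ∧ (∀ x, AbsCont (W x) qY) ∧
    v = ∑ x, pX x * G (fDiv f (W x) qY)}

theorem fDiv_eq_aux {Y : Type*} [Fintype Y] (f : ℝ → ℝ) (p q : Y → ℝ) (hq : ∀ y, 0 ≤ q y) :
    fDiv f p q = ∑ y, q y * f (p y / q y) := by
  unfold fDiv
  refine Finset.sum_congr rfl fun y _ => ?_
  split_ifs with h
  · rfl
  · have : q y = 0 := le_antisymm (not_lt.mp h) (hq y)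
    simp [this]

theorem mul_div_aux {Y : Type*} (p q : Y → ℝ) (h : AbsCont p q) (y : Y) :
    q y * (p y / q y) = p y := by
  by_cases h0 : q y = 0
  · simp [h0, h y h0]
  · field_simp

theorem fDiv_nonneg_aux {Y : Type*} [Fintype Y] (f : ℝ → ℝ) (hf : ConvexOn ℝ (Set.Ici 0) f)
    (hf1 : f 1 = 0) (p q : Y → ℝ) (hp : IsPMF p) (hq : IsPMF q) (h : AbsCont p q) :
    0 ≤ fDiv f p q := by
  rw [fDiv_eq_aux f p q hq.1]
  have := hf.map_sum_le (t := Finset.univ) (w := q) (p := fun y => p y / q y)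
    (fun y _ => hq.1 y) hq.2 (fun y _ => div_nonneg (hp.1 y) (hq.1 y))
  simp only [smul_eq_mul, mul_div_aux p q h, hp.2, hf1] at this
  exact this

theorem fDiv_lt_aux {Y : Type*} [Fintype Y] (f : ℝ → ℝ) (hf : ConvexOn ℝ (Set.Ici 0) f)
    (hf1 : f 1 = 0) (p q : Y → ℝ) (hp : IsPMF p) (hq : IsPMF q) (h : AbsCont p q) :
    fDiv f p q = 0 ∨ (fDiv f p q : EReal) < Dm f := by
  have hD0 := fDiv_nonneg_aux f hf hf1 p q hp hq h
  have hr : ∀ y, 0 ≤ p y / q y := fun y => div_nonneg (hp.1 y) (hq.1 y)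
  obtain ⟨T, hT1, hT⟩ : ∃ T : ℝ, 1 < T ∧ ∀ y, p y / q y ≤ T := by
    refine ⟨2 + ∑ y, p y / q y, ?_, fun y => ?_⟩
    · have := Finset.sum_nonneg (s := Finset.univ) (fun y _ => hr y)
      linarith
    · have := Finset.single_le_sum (s := Finset.univ) (fun y _ => hr y) (Finset.mem_univ y)
      linarith
  have hT0 : 0 < T := by linarith
  have chord : ∀ t, 0 ≤ t → t ≤ T → f t ≤ f 0 + t * ((f T - f 0) / T) := by
    intro t h0 h1
    have h0m : (0 : ℝ) ∈ Set.Ici (0 : ℝ) := Set.mem_Ici.mpr le_rfl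
    have hTm : T ∈ Set.Ici (0 : ℝ) := Set.mem_Ici.mpr hT0.le
    have ha : 0 ≤ 1 - t / T := by rw [sub_nonneg, div_le_one hT0]; exact h1
    have hb : 0 ≤ t / T := by positivity
    have := hf.2 h0m hTm ha hb (by ring)
    simp only [smul_eq_mul, mul_zero, zero_add] at this
    rw [div_mul_cancel₀ _ hT0.ne'] at this
    refine this.trans (le_of_eq ?_)
    field_simp
    ring
  have hD : fDiv f p q ≤ f 0 + (f T - f 0) / T := by
    rw [fDiv_eq_aux f p q hq.1]
    calc ∑ y, q y * f (p y / q y)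
        ≤ ∑ y, (q y * f 0 + p y * ((f T - f 0) / T)) := by
          refine Finset.sum_le_sum fun y _ => ?_
          have := mul_le_mul_of_nonneg_left (chord _ (hr y) (hT y)) (hq.1 y)
          rw [mul_add, ← mul_assoc, mul_div_aux p q h] at this
          exact this
      _ = _ := by
          rw [Finset.sum_add_distrib, ← Finset.sum_mul, ← Finset.sum_mul, hp.2, hq.2]; ring
  have hA : f 0 + (f T - f 0) / T = (1 - 1 / T) * (f 0 + f T / (T - 1)) := by
    have : T - 1 ≠ 0 := by linarith
    field_simp
    ring
  rw [hA] at hD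
  have hl : 0 < 1 / T := by positivity
  have hl1 : 1 / T < 1 := by rw [div_lt_one hT0]; exact hT1
  rcases le_or_gt (f 0 + f T / (T - 1)) 0 with hn | hpos
  · left
    nlinarith
  · right
    have h1 : fDiv f p q < f 0 + f T / (T - 1) := by nlinarith
    refine lt_of_lt_of_le (EReal.coe_lt_coe_iff.mpr h1) ?_
    unfold Dm
    rw [EReal.coe_add]
    exact add_le_add le_rfl
      (le_iSup (fun t : {t : ℝ // 1 < t} => ((f t.1 / (t.1 - 1) : ℝ) : EReal)) ⟨T, hT1⟩)

theorem isPMF_push_aux {Y Z : Type*} [Fintype Y] [Fintype Z] (q : Y → ℝ) (hq : IsPMF q)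
    (V : Y → Z → ℝ) (hV : ∀ y, IsPMF (V y)) : IsPMF (fun z => ∑ y, q y * V y z) := by
  refine ⟨fun z => Finset.sum_nonneg fun y _ => mul_nonneg (hq.1 y) ((hV y).1 z), ?_⟩
  rw [Finset.sum_comm]
  simp only [← Finset.mul_sum, (hV _).2, mul_one, hq.2]

theorem weight_zero_aux {Y Z : Type*} [Fintype Y] [Fintype Z] (q : Y → ℝ) (hq : IsPMF q)
    (V : Y → Z → ℝ) (hV : ∀ y, IsPMF (V y)) (z : Z) (h : ∑ y, q y * V y z = 0) (y : Y) :
    q y * V y z = 0 :=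
  (Finset.sum_eq_zero_iff_of_nonneg
    (fun y _ => mul_nonneg (hq.1 y) ((hV y).1 z))).mp h y (Finset.mem_univ y)

theorem absCont_push_aux {Y Z : Type*} [Fintype Y] [Fintype Z] (p q : Y → ℝ) (hq : IsPMF q)
    (V : Y → Z → ℝ) (hV : ∀ y, IsPMF (V y)) (h : AbsCont p q) :
    AbsCont (fun z => ∑ y, p y * V y z) (fun z => ∑ y, q y * V y z) := by
  intro z hz
  refine Finset.sum_eq_zero fun y _ => ?_
  rcases mul_eq_zero.mp (weight_zero_aux q hq V hV z hz y) with h0 | h0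
  · rw [h y h0, zero_mul]
  · rw [h0, mul_zero]

theorem fDiv_push_aux {Y Z : Type*} [Fintype Y] [Fintype Z]
    (f : ℝ → ℝ) (hf : ConvexOn ℝ (Set.Ici 0) f)
    (p q : Y → ℝ) (hp : IsPMF p) (hq : IsPMF q)
    (V : Y → Z → ℝ) (hV : ∀ y, IsPMF (V y)) (h : AbsCont p q) :
    fDiv f (fun z => ∑ y, p y * V y z) (fun z => ∑ y, q y * V y z) ≤ fDiv f p q := by
  rw [fDiv_eq_aux f p q hq.1, fDiv_eq_aux f _ _ (isPMF_push_aux q hq V hV).1]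
  have key : ∀ z, (∑ y, q y * V y z) * f ((∑ y, p y * V y z) / (∑ y, q y * V y z))
      ≤ ∑ y, q y * f (p y / q y) * V y z := by
    intro z
    by_cases hz : ∑ y, q y * V y z = 0
    · rw [hz, zero_mul]
      refine le_of_eq (Finset.sum_eq_zero fun y _ => ?_).symm
      rw [mul_right_comm, weight_zero_aux q hq V hV z hz y, zero_mul]
    · set S := ∑ y, q y * V y z with hS
      have hS0 : 0 ≤ S := (isPMF_push_aux q hq V hV).1 z
      have hSp : 0 < S := lt_of_le_of_ne hS0 (Ne.symm hz)
      have J := hf.map_sum_le (t := Finset.univ) (w := fun y => q y * V y z / S)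
        (p := fun y => p y / q y)
        (fun y _ => div_nonneg (mul_nonneg (hq.1 y) ((hV y).1 z)) hS0)
        (by rw [← Finset.sum_div, ← hS, div_self hz])
        (fun y _ => div_nonneg (hp.1 y) (hq.1 y))
      simp only [smul_eq_mul] at J
      have e : ∑ y, q y * V y z / S * (p y / q y) = (∑ y, p y * V y z) / S := by
        rw [Finset.sum_div]
        refine Finset.sum_congr rfl fun y _ => ?_
        nth_rewrite 2 [← mul_div_aux p q h y]
        ring
      rw [e] at J
      refine (mul_le_mul_of_nonneg_left J hS0).trans (le_of_eq ?_)
      rw [Finset.mul_sum]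
      refine Finset.sum_congr rfl fun y _ => ?_
      field_simp
  refine (Finset.sum_le_sum fun z _ => key z).trans (le_of_eq ?_)
  rw [Finset.sum_comm]
  simp only [← Finset.mul_sum, (hV _).2, mul_one]

/-- Data processing inequality: if `X → Y → Z` is a Markov chain (i.e. `Z` is
obtained from `Y` through the channel `V`), then `I_{G,f}(X;Y) ≥ I_{G,f}(X;Z)`. -/
theorem Igf_data_processing {X Y Z : Type*} [Fintype X] [Fintype Y] [Fintype Z]
    (G f : ℝ → ℝ) (hGf : Admissible G f)
    (pX : X → ℝ) (hpX : IsPMF pX)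
    (W : X → Y → ℝ) (hW : ∀ x, IsPMF (W x))
    (V : Y → Z → ℝ) (hV : ∀ y, IsPMF (V y)) :
    Igf G f pX (fun x z => ∑ y, W x y * V y z) ≤ Igf G f pX W := by
  obtain ⟨hf, hf1, hG0, hGm, hGn⟩ := hGf
  unfold Igf
  apply le_csInf
  · have hX : Nonempty X := by
      by_contra hn
      rw [not_nonempty_iff] at hn
      simpa using hpX.2
    obtain ⟨x⟩ := hX
    have hY : Nonempty Y := by
      by_contra hn
      rw [not_nonempty_iff] at hn
      simpa using (hW x).2
    have hc : (0 : ℝ) < Fintype.card Y := by exact_mod_cast Fintype.card_pos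
    refine ⟨_, fun _ => (Fintype.card Y : ℝ)⁻¹, ⟨fun _ => by positivity, ?_⟩, ?_, rfl⟩
    · simp [hc.ne']
    · intro x y hy
      exact absurd hy (inv_pos.mpr hc).ne'
  · rintro v ⟨q, hq, hac, rfl⟩
    have hle : ∑ x, pX x * G (fDiv f (fun z => ∑ y, W x y * V y z) (fun z => ∑ y, q y * V y z))
        ≤ ∑ x, pX x * G (fDiv f (W x) q) := by
      refine Finset.sum_le_sum fun x _ => mul_le_mul_of_nonneg_left ?_ (hpX.1 x)
      have h1 := fDiv_push_aux f hf (W x) q (hW x) hq V hV (hac x)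
      have h0 := fDiv_nonneg_aux f hf hf1 _ _ (isPMF_push_aux (W x) (hW x) V hV)
        (isPMF_push_aux q hq V hV) (absCont_push_aux (W x) q hq V hV (hac x))
      rcases fDiv_lt_aux f hf hf1 (W x) q (hW x) hq (hac x) with h2 | h2
      · rw [h2] at h1 ⊢
        rw [le_antisymm h1 h0]
      · exact hGm _ _ h0 h1 h2
    refine le_trans (csInf_le ?_ ?_) hle
    rotate_left
    · exact ⟨_, isPMF_push_aux q hq V hV,
        fun x => absCont_push_aux (W x) q hq V hV (hac x), rfl⟩
    refine ⟨0, ?_⟩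
    rintro v ⟨r, hr, hrac, rfl⟩
    refine Finset.sum_nonneg fun x _ => mul_nonneg (hpX.1 x) ?_
    have hWV := isPMF_push_aux (W x) (hW x) V hV
    rcases fDiv_lt_aux f hf hf1 _ r hWV hr (hrac x) with h2 | h2
    · rw [h2, hG0]
    · exact hGn _ (fDiv_nonneg_aux f hf hf1 _ r hWV hr (hrac x)) h2
end

section
/- Let f : [0,∞) → ℝ be convex with f(1) = 0 and let G : [0,∞) → [0,∞) be increasing, convex, with G(0) = 0. Let A, X, Y, B be finite sets and suppose A → X → Y → B forms a Markov chain, i.e. the joint pmf factorizes as p(a,x,y,b) = p_A(a) p_{X|A}(x|a) p_{Y|X}(y|x) p_{B|Y}(b|y). Then I_{G,f}(p_A, p_{B|A}) ≤ I_{G,f}(p_X, p_{Y|X}), where p_X is the marginal of X and p_{B|A} is the induced channel from A to B. -/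
open scoped BigOperators

theorem aux_fDiv_eq {X : Type*} [Fintype X] (f : ℝ → ℝ) (p q : X → ℝ) (hq : ∀ x, 0 ≤ q x) :
    fDiv f p q = ∑ x, q x * f (p x / q x) := by
  unfold fDiv
  refine Finset.sum_congr rfl fun x _ => ?_
  rcases (hq x).lt_or_eq with h | h
  · simp [h]
  · simp [← h]

theorem aux_persp {ι : Type*} [Fintype ι] (f : ℝ → ℝ) (hf : ConvexOn ℝ (Set.Ici 0) f)
    (u v : ι → ℝ) (hu : ∀ i, 0 ≤ u i) (hv : ∀ i, 0 ≤ v i) (huv : ∀ i, v i = 0 → u i = 0) :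
    (∑ i, v i) * f ((∑ i, u i) / ∑ i, v i) ≤ ∑ i, v i * f (u i / v i) := by
  have hV : 0 ≤ ∑ i, v i := Finset.sum_nonneg fun i _ => hv i
  rcases hV.lt_or_eq with h | h
  · have key := hf.map_sum_le (t := Finset.univ) (w := fun i => v i / ∑ j, v j)
      (p := fun i => u i / v i) (fun i _ => div_nonneg (hv i) hV)
      (by rw [← Finset.sum_div]; exact div_self h.ne')
      (fun i _ => div_nonneg (hu i) (hv i))
    simp only [smul_eq_mul] at key
    have e : ∑ i, v i / (∑ j, v j) * (u i / v i) = (∑ i, u i) / ∑ i, v i := by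
      rw [Finset.sum_div]
      refine Finset.sum_congr rfl fun i _ => ?_
      by_cases h0 : v i = 0
      · simp [h0, huv i h0]
      · field_simp
    rw [e] at key
    calc _ ≤ (∑ i, v i) * ∑ i, v i / (∑ j, v j) * f (u i / v i) :=
          mul_le_mul_of_nonneg_left key hV
      _ = _ := by
          rw [Finset.mul_sum]
          refine Finset.sum_congr rfl fun i _ => ?_
          field_simp
  · have h0 := (Finset.sum_eq_zero_iff_of_nonneg (fun i _ => hv i)).1 h.symm
    rw [← h, zero_mul]
    refine (Finset.sum_eq_zero fun i hi => ?_).ge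
    rw [h0 i hi, zero_mul]

theorem aux_fDiv_nonneg {X : Type*} [Fintype X] (f : ℝ → ℝ) (hf : ConvexOn ℝ (Set.Ici 0) f)
    (hf1 : f 1 = 0) (p q : X → ℝ) (hp : IsPMF p) (hq : IsPMF q) (h : AbsCont p q) :
    0 ≤ fDiv f p q := by
  have := aux_persp f hf p q hp.1 hq.1 h
  rw [aux_fDiv_eq f p q hq.1]
  simpa [hp.2, hq.2, hf1] using this

theorem aux_fDiv_dpi {X Y B : Type*} [Fintype X] [Fintype Y] [Fintype B]
    (f : ℝ → ℝ) (hf : ConvexOn ℝ (Set.Ici 0) f)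
    (c : X → ℝ) (hc : IsPMF c) (W : X → Y → ℝ) (hW : ∀ x, IsPMF (W x))
    (K : Y → B → ℝ) (hK : ∀ y, IsPMF (K y)) (q : Y → ℝ) (hq : IsPMF q)
    (h : ∀ x, AbsCont (W x) q) :
    fDiv f (fun b => ∑ x, ∑ y, c x * W x y * K y b) (fun b => ∑ y, q y * K y b) ≤
      ∑ x, c x * fDiv f (W x) q := by
  rw [aux_fDiv_eq _ _ _ (fun b => Finset.sum_nonneg fun y _ => mul_nonneg (hq.1 y) ((hK y).1 b))]
  have step : ∀ b, (∑ y, q y * K y b) *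
      f ((∑ x, ∑ y, c x * W x y * K y b) / ∑ y, q y * K y b) ≤
      ∑ x, ∑ y, c x * (K y b * (q y * f (W x y / q y))) := by
    intro b
    have k := aux_persp (ι := X × Y) f hf (fun i => c i.1 * W i.1 i.2 * K i.2 b)
      (fun i => c i.1 * q i.2 * K i.2 b)
      (fun i => mul_nonneg (mul_nonneg (hc.1 _) ((hW _).1 _)) ((hK _).1 _))
      (fun i => mul_nonneg (mul_nonneg (hc.1 _) (hq.1 _)) ((hK _).1 _))
      (by
        intro i hi
        simp only [mul_eq_zero] at hi ⊢
        rcases hi with (hi | hi) | hi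
        · exact Or.inl (Or.inl hi)
        · exact Or.inl (Or.inr (h _ _ hi))
        · exact Or.inr hi)
    simp only [Fintype.sum_prod_type] at k
    have e : ∑ x, ∑ y, c x * q y * K y b = ∑ y, q y * K y b := by
      simp only [mul_assoc, ← Finset.mul_sum]
      rw [← Finset.sum_mul, hc.2, one_mul]
    rw [e] at k
    refine k.trans_eq ?_
    refine Finset.sum_congr rfl fun x _ => Finset.sum_congr rfl fun y _ => ?_
    by_cases h1 : c x = 0
    · simp [h1]
    by_cases h2 : K y b = 0
    · simp [h2]
    have : c x * W x y * K y b / (c x * q y * K y b) = W x y / q y := by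
      rw [mul_div_mul_right _ _ h2, mul_div_mul_left _ _ h1]
    rw [this]; ring
  refine (Finset.sum_le_sum fun b _ => step b).trans_eq ?_
  rw [Finset.sum_comm]
  refine Finset.sum_congr rfl fun x _ => ?_
  rw [Finset.sum_comm, aux_fDiv_eq _ _ _ hq.1, Finset.mul_sum]
  refine Finset.sum_congr rfl fun y _ => ?_
  rw [← Finset.mul_sum, ← Finset.sum_mul, (hK y).2, one_mul]

theorem aux_pmf_nonempty {X : Type*} [Fintype X] {p : X → ℝ} (hp : IsPMF p) : Nonempty X := by
  by_contra hn
  rw [not_nonempty_iff] at hn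
  have := hp.2
  simp at this

theorem aux_pmf_comp {X Y : Type*} [Fintype X] [Fintype Y] {p : X → ℝ} (hp : IsPMF p)
    {K : X → Y → ℝ} (hK : ∀ x, IsPMF (K x)) : IsPMF (fun y => ∑ x, p x * K x y) := by
  refine ⟨fun y => Finset.sum_nonneg fun x _ => mul_nonneg (hp.1 x) ((hK x).1 y), ?_⟩
  rw [Finset.sum_comm]
  simp [← Finset.mul_sum, (hK _).2, hp.2]

/-- Four-node data processing: if `A → X → Y → B` is a Markov chain, `f` is convex
with `f 1 = 0`, and `G : [0,∞) → [0,∞)` is increasing and convex with `G 0 = 0`,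
then `I_{G,f}(A;B) ≤ I_{G,f}(X;Y)`. -/
theorem Igf_four_node_data_processing
    {A X Y B : Type*} [Fintype A] [Fintype X] [Fintype Y] [Fintype B]
    (G f : ℝ → ℝ)
    (hf : ConvexOn ℝ (Set.Ici 0) f) (hf1 : f 1 = 0)
    (hGmono : StrictMonoOn G (Set.Ici 0)) (hGconv : ConvexOn ℝ (Set.Ici 0) G)
    (hG0 : G 0 = 0) (hGnonneg : ∀ x ∈ Set.Ici (0 : ℝ), 0 ≤ G x)
    (pA : A → ℝ) (hpA : IsPMF pA)
    (pXA : A → X → ℝ) (hpXA : ∀ a, IsPMF (pXA a))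
    (W : X → Y → ℝ) (hW : ∀ x, IsPMF (W x))
    (pBY : Y → B → ℝ) (hpBY : ∀ y, IsPMF (pBY y)) :
    Igf G f pA (fun a b => ∑ x, ∑ y, pXA a x * W x y * pBY y b) ≤
      Igf G f (fun x => ∑ a, pA a * pXA a x) W := by
  classical
  have hWB : ∀ a, IsPMF (fun b => ∑ x, ∑ y, pXA a x * W x y * pBY y b) := by
    intro a
    have := aux_pmf_comp (hpXA a) (fun x => aux_pmf_comp (hW x) hpBY)
    simpa only [Finset.mul_sum, mul_assoc] using this
  have habs : ∀ q : Y → ℝ, IsPMF q → (∀ x, AbsCont (W x) q) → ∀ a,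
      AbsCont (fun b => ∑ x, ∑ y, pXA a x * W x y * pBY y b) (fun b => ∑ y, q y * pBY y b) := by
    intro q hq hac a b hb
    have h0 := (Finset.sum_eq_zero_iff_of_nonneg
      (fun y _ => mul_nonneg (hq.1 y) ((hpBY y).1 b))).1 hb
    refine Finset.sum_eq_zero fun x _ => Finset.sum_eq_zero fun y hy => ?_
    rcases mul_eq_zero.1 (h0 y hy) with h | h
    · simp [hac x y h]
    · simp [h]
  unfold Igf
  refine le_csInf ?_ ?_
  · obtain ⟨a⟩ := aux_pmf_nonempty hpA
    obtain ⟨x⟩ := aux_pmf_nonempty (hpXA a)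
    have := aux_pmf_nonempty (hW x)
    have hc : (0 : ℝ) < Fintype.card Y := by exact_mod_cast Fintype.card_pos
    refine ⟨_, fun _ => (Fintype.card Y : ℝ)⁻¹, ⟨fun _ => by positivity, ?_⟩, ?_, rfl⟩
    · simp [hc.ne']
    · intro x y hy
      exact absurd hy (inv_pos.2 hc).ne'
  · rintro v ⟨q, hq, hac, rfl⟩
    have hqB : IsPMF (fun b => ∑ y, q y * pBY y b) := aux_pmf_comp hq hpBY
    refine le_trans (csInf_le ?_ ⟨fun b => ∑ y, q y * pBY y b, hqB, ?_, rfl⟩) ?_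
    · refine ⟨0, ?_⟩
      rintro v ⟨r, hr, hrac, rfl⟩
      exact Finset.sum_nonneg fun a _ => mul_nonneg (hpA.1 a)
        (hGnonneg _ (aux_fDiv_nonneg f hf hf1 _ _ (hWB a) hr (hrac a)))
    · exact habs q hq hac
    · have hD : ∀ x, 0 ≤ fDiv f (W x) q := fun x =>
        aux_fDiv_nonneg f hf hf1 _ _ (hW x) hq (hac x)
      have key : ∀ a, G (fDiv f (fun b => ∑ x, ∑ y, pXA a x * W x y * pBY y b)
          (fun b => ∑ y, q y * pBY y b)) ≤ ∑ x, pXA a x * G (fDiv f (W x) q) := by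
        intro a
        have h1 := aux_fDiv_dpi f hf (pXA a) (hpXA a) W hW pBY hpBY q hq hac
        have h2 := aux_fDiv_nonneg f hf hf1 _ _ (hWB a) hqB (habs q hq hac a)
        have h3 := hGmono.monotoneOn h2 (h2.trans h1) h1
        refine h3.trans ?_
        have h4 := hGconv.map_sum_le (t := Finset.univ) (w := pXA a)
          (p := fun x => fDiv f (W x) q) (fun x _ => (hpXA a).1 x) (hpXA a).2 (fun x _ => hD x)
        simpa only [smul_eq_mul] using h4
      refine (Finset.sum_le_sum fun a _ => mul_le_mul_of_nonneg_left (key a) (hpA.1 a)).trans_eq ?_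
      simp only [Finset.mul_sum, Finset.sum_mul]
      rw [Finset.sum_comm]
      simp only [mul_assoc]
end

section
/- Let ν ∈ (0,∞], let G : [0,ν) → [0,∞) be an increasing function with G(0) = 0 whose range is all of [0,∞), and assume that for every c > 0 the function x ↦ G⁻¹(G(x) + G(c)) is concave on [0,ν). Let f : [0,∞) → ℝ be convex with f(1) = 0 and D_m(f) ≤ ν. If the subadditivity inequality G(D_f(q_Y⊗q_Z‖r_Y⊗r_Z)) ≤ G(D_f(q_Y‖r_Y)) + G(D_f(q_Z‖r_Z)) holds for all pmfs q_Y ≪ r_Y and q_Z ≪ r_Z on two-element alphabets, then it holds for all pmfs q_Y ≪ r_Y and q_Z ≪ r_Z on arbitrary finite alphabets 𝒴 and 𝒵. -/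
open scoped BigOperators

lemma aux_decomp {V : Type*} [AddCommGroup V] [Module ℝ V] (S : Set V) (hS : Convex ℝ S)
    (F : ℝ → V)
    (hb : ∀ p x y : ℝ, 0 ≤ p → p ≤ 1 → 0 ≤ x → 0 ≤ y → p * x + (1 - p) * y = 1 →
      p • F x + (1 - p) • F y ∈ S)
    {Y : Type*} [Fintype Y] (r x : Y → ℝ) (hr : ∀ y, 0 ≤ r y) (hr1 : ∑ y, r y = 1)
    (hx : ∀ y, 0 ≤ x y) (hrx : ∑ y, r y * x y = 1) :
    ∑ y, r y • F (x y) ∈ S := by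
  classical
  set A : Finset Y := Finset.univ.filter (fun y => 1 < x y) with hA
  set B : Finset Y := Finset.univ.filter (fun y => ¬ 1 < x y) with hB
  have split1 : ∀ g : Y → ℝ, ∑ y ∈ A, g y + ∑ y ∈ B, g y = ∑ y, g y := fun g =>
    Finset.sum_filter_add_sum_filter_not _ _ _
  have splitV : ∀ g : Y → V, ∑ y ∈ A, g y + ∑ y ∈ B, g y = ∑ y, g y := fun g =>
    Finset.sum_filter_add_sum_filter_not _ _ _
  set Δ := ∑ y ∈ A, r y * (x y - 1) with hΔ
  have hΔB : ∑ y ∈ B, r y * (1 - x y) = Δ := by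
    have h := split1 (fun y => r y * (x y - 1))
    have h2 : ∑ y, r y * (x y - 1) = 0 := by
      simp only [mul_sub, mul_one, Finset.sum_sub_distrib, hr1, hrx, sub_self]
    have h3 : ∑ y ∈ B, r y * (1 - x y) = - ∑ y ∈ B, r y * (x y - 1) := by
      rw [← Finset.sum_neg_distrib]; apply Finset.sum_congr rfl; intros; ring
    linarith
  have hAm : ∀ y ∈ A, 1 < x y := fun y hy => by simpa [hA] using hy
  have hBm : ∀ y ∈ B, x y ≤ 1 := fun y hy => by simpa [hB] using hy
  have hAn : ∀ y ∈ A, 0 ≤ r y * (x y - 1) := fun y hy =>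
    mul_nonneg (hr y) (by linarith [hAm y hy])
  have hBn : ∀ y ∈ B, 0 ≤ r y * (1 - x y) := fun y hy =>
    mul_nonneg (hr y) (by linarith [hBm y hy])
  have hΔ0 : 0 ≤ Δ := Finset.sum_nonneg hAn
  rcases hΔ0.eq_or_lt with h0 | hpos
  · have hz : ∀ y, r y * (x y - 1) = 0 := by
      intro y
      by_cases hy : 1 < x y
      · exact (Finset.sum_eq_zero_iff_of_nonneg hAn).1 h0.symm y (by simp [hA, hy])
      · have := (Finset.sum_eq_zero_iff_of_nonneg hBn).1 (hΔB.trans h0.symm) y (by simpa [hB] using hy)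
        linarith
    have : ∑ y, r y • F (x y) = ∑ y, r y • F 1 := by
      apply Finset.sum_congr rfl
      intro y _
      rcases mul_eq_zero.1 (hz y) with h | h
      · simp [h]
      · rw [sub_eq_zero.1 h]
    rw [this, ← Finset.sum_smul, hr1]
    simpa using hb 1 1 1 (by norm_num) le_rfl (by norm_num) (by norm_num) (by norm_num)
  · have key : ∑ y, r y • F (x y) = ∑ ij ∈ A ×ˢ B,
        (r ij.1 * r ij.2 * (x ij.1 - x ij.2) / Δ) •
          (((1 - x ij.2) / (x ij.1 - x ij.2)) • F (x ij.1) +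
            (1 - (1 - x ij.2) / (x ij.1 - x ij.2)) • F (x ij.2)) := by
      have e1 : ∀ ij ∈ A ×ˢ B, (r ij.1 * r ij.2 * (x ij.1 - x ij.2) / Δ) •
          (((1 - x ij.2) / (x ij.1 - x ij.2)) • F (x ij.1) +
            (1 - (1 - x ij.2) / (x ij.1 - x ij.2)) • F (x ij.2)) =
          ((r ij.2 * (1 - x ij.2)) * (r ij.1 / Δ)) • F (x ij.1) +
          ((r ij.1 * (x ij.1 - 1)) * (r ij.2 / Δ)) • F (x ij.2) := by
        intro ij hij
        rw [Finset.mem_product] at hij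
        have h1 := hAm _ hij.1
        have h2 := hBm _ hij.2
        have h3 : x ij.1 - x ij.2 ≠ 0 := by linarith
        have h4 := hpos.ne'
        rw [smul_add, smul_smul, smul_smul]
        congr 2
        · field_simp
        · field_simp
          ring
      rw [Finset.sum_congr rfl e1, Finset.sum_add_distrib, Finset.sum_product,
        Finset.sum_product_right, ← splitV]
      simp only [← Finset.sum_smul, ← Finset.sum_mul]
      rw [hΔB, ← hΔ]
      congr 1 <;>
      · apply Finset.sum_congr rfl
        intro y _
        rw [mul_div_cancel₀ _ hpos.ne']
    rw [key]
    apply hS.sum_mem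
    · intro ij hij
      rw [Finset.mem_product] at hij
      have h1 := hAm _ hij.1
      have h2 := hBm _ hij.2
      exact div_nonneg (mul_nonneg (mul_nonneg (hr _) (hr _)) (by linarith)) hΔ0
    · have e2 : ∀ ij ∈ A ×ˢ B, r ij.1 * r ij.2 * (x ij.1 - x ij.2) / Δ =
          (r ij.2 * (1 - x ij.2)) * (r ij.1 / Δ) + (r ij.1 * (x ij.1 - 1)) * (r ij.2 / Δ) := by
        intro ij _
        ring
      rw [Finset.sum_congr rfl e2, Finset.sum_add_distrib, Finset.sum_product,
        Finset.sum_product_right]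
      simp only [← Finset.sum_mul]
      rw [hΔB, ← hΔ]
      simp only [mul_div_cancel₀ _ hpos.ne']
      rw [split1, hr1]
    · intro ij hij
      rw [Finset.mem_product] at hij
      have h1 := hAm _ hij.1
      have h2 := hBm _ hij.2
      have h3 : 0 < x ij.1 - x ij.2 := by linarith
      apply hb _ _ _ _ _ (hx _) (hx _)
      · field_simp
        ring
      · exact div_nonneg (by linarith) h3.le
      · rw [div_le_one h3]; linarith

lemma aux_fDiv {Y : Type*} [Fintype Y] (f : ℝ → ℝ) (q r : Y → ℝ) (hr : ∀ y, 0 ≤ r y) :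
    fDiv f q r = ∑ y, r y * f (q y / r y) := by
  unfold fDiv
  apply Finset.sum_congr rfl
  intro y _
  split_ifs with h
  · rfl
  · rw [le_antisymm (not_lt.1 h) (hr y), zero_mul]

lemma aux_fDiv_prod {Y Z : Type*} [Fintype Y] [Fintype Z] (f : ℝ → ℝ) (q r : Y → ℝ)
    (q' r' : Z → ℝ) (hr : ∀ y, 0 ≤ r y) (hr' : ∀ y, 0 ≤ r' y) :
    fDiv f (fun p : Y × Z => q p.1 * q' p.2) (fun p : Y × Z => r p.1 * r' p.2) =
      ∑ y, r y * ∑ z, r' z * f (q y / r y * (q' z / r' z)) := by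
  rw [aux_fDiv _ _ _ (fun p => mul_nonneg (hr _) (hr' _)), Fintype.sum_prod_type]
  apply Finset.sum_congr rfl
  intro y _
  rw [Finset.mul_sum]
  apply Finset.sum_congr rfl
  intro z _
  simp only [mul_div_mul_comm, mul_assoc]

lemma aux_ratio {Y : Type*} [Fintype Y] {q r : Y → ℝ} (hq : IsPMF q) (h : AbsCont q r) :
    ∑ y, r y * (q y / r y) = 1 := by
  rw [← hq.2]
  apply Finset.sum_congr rfl
  intro y _
  by_cases h0 : r y = 0
  · simp [h0, h y h0]
  · field_simp

lemma aux_range (ν : EReal) (hν : 0 < ν) (f : ℝ → ℝ)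
    (hconv : ConvexOn ℝ (Set.Ici 0) f) (hf1 : f 1 = 0) (hDm : Dm f ≤ ν)
    {Y : Type*} [Fintype Y] (q r : Y → ℝ) (hq : IsPMF q) (hr : IsPMF r) (h : AbsCont q r) :
    0 ≤ fDiv f q r ∧ ((fDiv f q r : ℝ) : EReal) < ν := by
  have hs := aux_ratio hq h
  rw [aux_fDiv f q r hr.1]
  set x : Y → ℝ := fun y => q y / r y with hxdef
  have hx : ∀ y, 0 ≤ x y := fun y => div_nonneg (hq.1 y) (hr.1 y)
  change ∑ y, r y * x y = 1 at hs
  change 0 ≤ ∑ y, r y * f (x y) ∧ ((∑ y, r y * f (x y) : ℝ) : EReal) < ν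
  constructor
  · have := hconv.map_sum_le (t := Finset.univ) (w := r) (p := x) (fun y _ => hr.1 y) hr.2
      (fun y _ => hx y)
    simp only [smul_eq_mul, hs, hf1] at this
    exact this
  · induction ν using EReal.rec with
    | bot => simp at hν
    | top => exact EReal.coe_lt_top _
    | coe n =>
      have hn : 0 < n := by exact_mod_cast hν
      rw [EReal.coe_lt_coe_iff]
      have h1 : ∀ t : ℝ, 1 < t → f t ≤ (n - f 0) * (t - 1) := by
        intro t ht
        have h2 : ((f 0 : ℝ) : EReal) + ((f t / (t - 1) : ℝ) : EReal) ≤ n :=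
          le_trans (add_le_add le_rfl
            (le_iSup (fun t : {t : ℝ // 1 < t} => ((f t.1 / (t.1 - 1) : ℝ) : EReal)) ⟨t, ht⟩)) hDm
        have h3 : f 0 + f t / (t - 1) ≤ n := by exact_mod_cast h2
        rw [← div_le_iff₀ (by linarith)]
        linarith
      have h2 : ∀ t : ℝ, 0 ≤ t → f t ≤ (n - f 0) * (t - 1) + n * (1 - min 1 t) := by
        intro t ht
        rcases lt_or_ge 1 t with h | h
        · rw [min_eq_left h.le]; linarith [h1 t h]
        · rw [min_eq_right h]
          have := hconv.2 (Set.mem_Ici.2 (le_refl (0:ℝ))) (Set.mem_Ici.2 (zero_le_one' ℝ))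
            (sub_nonneg.2 h) ht (sub_add_cancel 1 t)
          simp only [smul_eq_mul, hf1] at this
          ring_nf at this ⊢
          linarith
      have h3 : ∑ y, r y * f (x y) ≤ ∑ y, ((n - f 0) * (r y * x y) - (n - f 0) * r y +
          (n * r y - n * (r y * min 1 (x y)))) := by
        apply Finset.sum_le_sum
        intro y _
        have := mul_le_mul_of_nonneg_left (h2 _ (hx y)) (hr.1 y)
        linarith
      rw [Finset.sum_add_distrib, Finset.sum_sub_distrib, Finset.sum_sub_distrib,
        ← Finset.mul_sum, ← Finset.mul_sum, ← Finset.mul_sum, ← Finset.mul_sum, hs, hr.2] at h3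
      have hnn : ∀ y ∈ Finset.univ, 0 ≤ r y * min 1 (x y) := fun y _ =>
        mul_nonneg (hr.1 y) (le_min zero_le_one (hx y))
      have h4 : 0 < ∑ y, r y * min 1 (x y) := by
        apply lt_of_le_of_ne (Finset.sum_nonneg hnn)
        intro h0
        have h5 := (Finset.sum_eq_zero_iff_of_nonneg hnn).1 h0.symm
        have : ∑ y, r y * x y = 0 := by
          apply Finset.sum_eq_zero
          intro y hy
          rcases mul_eq_zero.1 (h5 y hy) with h | h
          · simp [h]
          · have : x y = 0 := by
              rcases min_choice 1 (x y) with h' | h' <;> rw [h'] at h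
              · norm_num at h
              · exact h
            simp [this]
        linarith
      nlinarith [mul_pos hn h4]

lemma aux_prod_pmf {Y Z : Type*} [Fintype Y] [Fintype Z] {q : Y → ℝ} {q' : Z → ℝ}
    (h : IsPMF q) (h' : IsPMF q') : IsPMF (fun p : Y × Z => q p.1 * q' p.2) := by
  refine ⟨fun p => mul_nonneg (h.1 _) (h'.1 _), ?_⟩
  rw [Fintype.sum_prod_type]
  simp only [← Finset.mul_sum, h'.2, mul_one, h.2]

lemma aux_prod_ac {Y Z : Type*} {q r : Y → ℝ} {q' r' : Z → ℝ}
    (h : AbsCont q r) (h' : AbsCont q' r') :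
    AbsCont (fun p : Y × Z => q p.1 * q' p.2) (fun p : Y × Z => r p.1 * r' p.2) := by
  intro p hp
  rcases mul_eq_zero.1 hp with h0 | h0
  · simp [h _ h0]
  · simp [h' _ h0]

lemma aux_swap {Y Z : Type*} [Fintype Y] [Fintype Z] (f : ℝ → ℝ) (q r : Y → ℝ)
    (q' r' : Z → ℝ) :
    fDiv f (fun p : Y × Z => q p.1 * q' p.2) (fun p : Y × Z => r p.1 * r' p.2) =
    fDiv f (fun p : Z × Y => q' p.1 * q p.2) (fun p : Z × Y => r' p.1 * r p.2) := by
  unfold fDiv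
  apply Fintype.sum_equiv (Equiv.prodComm Y Z)
  rintro ⟨y, z⟩
  simp [mul_comm]

lemma aux_step
    (ν : EReal) (hν : 0 < ν) (G Ginv f : ℝ → ℝ)
    (hGmono : StrictMonoOn G {x : ℝ | 0 ≤ x ∧ (x : EReal) < ν})
    (hG0 : G 0 = 0)
    (hGinv_left : ∀ x : ℝ, 0 ≤ x → (x : EReal) < ν → Ginv (G x) = x)
    (hGinv_right : ∀ y : ℝ, 0 ≤ y →
      G (Ginv y) = y ∧ 0 ≤ Ginv y ∧ ((Ginv y : ℝ) : EReal) < ν)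
    (hconc : ∀ c : ℝ, 0 < c → (c : EReal) < ν →
      ConcaveOn ℝ {x : ℝ | 0 ≤ x ∧ (x : EReal) < ν} (fun x => Ginv (G x + G c)))
    (hconv : ConvexOn ℝ (Set.Ici 0) f) (hf1 : f 1 = 0)
    (hDm : Dm f ≤ ν) {Z : Type*} [Fintype Z] (qZ rZ : Z → ℝ)
    (hqZ : IsPMF qZ) (hrZ : IsPMF rZ) (hZ : AbsCont qZ rZ)
    (hbin : ∀ (qY rY : Fin 2 → ℝ), IsPMF qY → IsPMF rY → AbsCont qY rY →
      G (fDiv f (fun p : Fin 2 × Z => qY p.1 * qZ p.2)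
                (fun p : Fin 2 × Z => rY p.1 * rZ p.2)) ≤
        G (fDiv f qY rY) + G (fDiv f qZ rZ))
    {Y : Type*} [Fintype Y] (qY rY : Y → ℝ)
    (hqY : IsPMF qY) (hrY : IsPMF rY) (hY : AbsCont qY rY) :
    G (fDiv f (fun p : Y × Z => qY p.1 * qZ p.2)
                (fun p : Y × Z => rY p.1 * rZ p.2)) ≤
        G (fDiv f qY rY) + G (fDiv f qZ rZ) := by
  set s : Set ℝ := {x : ℝ | 0 ≤ x ∧ (x : EReal) < ν} with hsdef
  set c := fDiv f qZ rZ with hc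
  have hcs : c ∈ s := aux_range ν hν f hconv hf1 hDm qZ rZ hqZ hrZ hZ
  have hGnn : ∀ x ∈ s, 0 ≤ G x := by
    intro x hx
    rw [← hG0]
    exact hGmono.monotoneOn ⟨le_rfl, by simpa using hν⟩ hx hx.1
  have hsconv : Convex ℝ s := by
    apply Set.OrdConnected.convex
    constructor
    intro a ha b hb z hz
    exact ⟨ha.1.trans hz.1, lt_of_le_of_lt (EReal.coe_le_coe_iff.2 hz.2) hb.2⟩
  have hH : ConcaveOn ℝ s (fun x => Ginv (G x + G c)) := by
    rcases hcs.1.eq_or_lt with h0 | h0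
    · apply (concaveOn_id hsconv).congr
      intro x hx
      simp only [← h0, hG0, add_zero, id]
      exact (hGinv_left x hx.1 hx.2).symm
    · exact hconc c h0 hcs.2
  have hiff : ∀ u ∈ s, ∀ v ∈ s, (v ≤ Ginv (G u + G c) ↔ G v ≤ G u + G c) := by
    intro u hu v hv
    obtain ⟨h1, h2⟩ := hGinv_right (G u + G c) (add_nonneg (hGnn u hu) (hGnn c hcs))
    have := hGmono.le_iff_le hv (b := Ginv (G u + G c)) h2
    rw [h1] at this
    exact this.symm
  have key := aux_decomp _ hH.convex_hypograph
    (fun t => ((f t, ∑ z, rZ z * f (t * (qZ z / rZ z))) : ℝ × ℝ)) ?_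
    rY (fun y => qY y / rY y) hrY.1 hrY.2 (fun y => div_nonneg (hqY.1 y) (hrY.1 y))
    (aux_ratio hqY hY)
  · have e : ∑ y, rY y • ((f (qY y / rY y),
        ∑ z, rZ z * f (qY y / rY y * (qZ z / rZ z))) : ℝ × ℝ) =
        (fDiv f qY rY, fDiv f (fun p : Y × Z => qY p.1 * qZ p.2)
                (fun p : Y × Z => rY p.1 * rZ p.2)) := by
      rw [aux_fDiv_prod f qY rY qZ rZ hrY.1 hrZ.1, aux_fDiv f qY rY hrY.1]
      ext <;> simp [Prod.fst_sum, Prod.snd_sum]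
    rw [e] at key
    refine (hiff _ key.1 _ ?_).1 key.2
    exact aux_range ν hν f hconv hf1 hDm _ _ (aux_prod_pmf hqY hqZ) (aux_prod_pmf hrY hrZ)
      (aux_prod_ac hY hZ)
  · intro p x y hp hp1 hx hy hxy
    have hr : IsPMF (![p, 1 - p] : Fin 2 → ℝ) := by
      refine ⟨fun i => ?_, by simp⟩
      fin_cases i
      · exact hp
      · exact sub_nonneg.2 hp1
    have hq : IsPMF (![p * x, (1 - p) * y] : Fin 2 → ℝ) := by
      refine ⟨fun i => ?_, by simpa using hxy⟩
      fin_cases i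
      · exact mul_nonneg hp hx
      · exact mul_nonneg (sub_nonneg.2 hp1) hy
    have ha : AbsCont (![p * x, (1 - p) * y] : Fin 2 → ℝ) ![p, 1 - p] := by
      intro i
      fin_cases i
      · intro h
        change p = 0 at h
        change p * x = 0
        simp [h]
      · intro h
        change 1 - p = 0 at h
        change (1 - p) * y = 0
        simp [h]
    have hcanc : ∀ a t : ℝ, ∀ g : ℝ → ℝ, a * g (a * t / a) = a * g t := by
      intro a t g
      by_cases h : a = 0
      · simp [h]
      · rw [mul_div_cancel_left₀ _ h]
    have hB := hbin _ _ hq hr ha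
    have hu := aux_range ν hν f hconv hf1 hDm _ _ hq hr ha
    have hv := aux_range ν hν f hconv hf1 hDm _ _ (aux_prod_pmf hq hqZ) (aux_prod_pmf hr hrZ)
      (aux_prod_ac ha hZ)
    have e : p • ((f x, ∑ z, rZ z * f (x * (qZ z / rZ z))) : ℝ × ℝ) +
        (1 - p) • ((f y, ∑ z, rZ z * f (y * (qZ z / rZ z))) : ℝ × ℝ) =
        (fDiv f ![p * x, (1 - p) * y] ![p, 1 - p],
          fDiv f (fun i : Fin 2 × Z => (![p * x, (1 - p) * y] : Fin 2 → ℝ) i.1 * qZ i.2)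
                (fun i : Fin 2 × Z => (![p, 1 - p] : Fin 2 → ℝ) i.1 * rZ i.2)) := by
      rw [aux_fDiv_prod f _ _ qZ rZ hr.1 hrZ.1, aux_fDiv f _ _ hr.1]
      have c1 := hcanc p x f
      have c2 := hcanc (1 - p) y f
      have c3 := hcanc p x (fun t => ∑ z, rZ z * f (t * (qZ z / rZ z)))
      have c4 := hcanc (1 - p) y (fun t => ∑ z, rZ z * f (t * (qZ z / rZ z)))
      simp only [Fin.sum_univ_two, Matrix.cons_val_zero, Matrix.cons_val_one]
      ext
      · simp only [Prod.fst_add, Prod.smul_fst, smul_eq_mul]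
        rw [c1, c2]
      · simp only [Prod.snd_add, Prod.smul_snd, smul_eq_mul]
        rw [c3, c4]
    refine Set.mem_of_eq_of_mem e ?_
    exact ⟨hu, (hiff _ hu _ hv).2 hB⟩

/-- Binary reduction for divergence subadditivity.  Let `G : [0,ν) → [0,∞)` be
increasing with `G 0 = 0` and range all of `[0,∞)`, with inverse `Ginv`, such that
for every `c > 0` in the domain the map `x ↦ G⁻¹(G x + G c)` is concave on `[0,ν)`.
Let `f` be convex with `f 1 = 0` and `D_m(f) ≤ ν`.  If the subadditivity inequality
holds on binary alphabets, then it holds on arbitrary finite alphabets. -/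
theorem divSubadditive_binary_reduction
    (ν : EReal) (hν : 0 < ν) (G Ginv f : ℝ → ℝ)
    (hGmono : StrictMonoOn G {x : ℝ | 0 ≤ x ∧ (x : EReal) < ν})
    (hG0 : G 0 = 0)
    (hGrange : G '' {x : ℝ | 0 ≤ x ∧ (x : EReal) < ν} = Set.Ici 0)
    (hGinv_left : ∀ x : ℝ, 0 ≤ x → (x : EReal) < ν → Ginv (G x) = x)
    (hGinv_right : ∀ y : ℝ, 0 ≤ y →
      G (Ginv y) = y ∧ 0 ≤ Ginv y ∧ ((Ginv y : ℝ) : EReal) < ν)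
    (hconc : ∀ c : ℝ, 0 < c → (c : EReal) < ν →
      ConcaveOn ℝ {x : ℝ | 0 ≤ x ∧ (x : EReal) < ν} (fun x => Ginv (G x + G c)))
    (hconv : ConvexOn ℝ (Set.Ici 0) f) (hf1 : f 1 = 0)
    (hDm : Dm f ≤ ν)
    (hbin : ∀ (qY rY qZ rZ : Fin 2 → ℝ),
      IsPMF qY → IsPMF rY → IsPMF qZ → IsPMF rZ → AbsCont qY rY → AbsCont qZ rZ →
      G (fDiv f (fun p : Fin 2 × Fin 2 => qY p.1 * qZ p.2)
                (fun p : Fin 2 × Fin 2 => rY p.1 * rZ p.2)) ≤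
        G (fDiv f qY rY) + G (fDiv f qZ rZ)) :
    ∀ (Y Z : Type) [Fintype Y] [Fintype Z] (qY rY : Y → ℝ) (qZ rZ : Z → ℝ),
      IsPMF qY → IsPMF rY → IsPMF qZ → IsPMF rZ → AbsCont qY rY → AbsCont qZ rZ →
      G (fDiv f (fun p : Y × Z => qY p.1 * qZ p.2)
                (fun p : Y × Z => rY p.1 * rZ p.2)) ≤
        G (fDiv f qY rY) + G (fDiv f qZ rZ) := by
  intro Y Z _ _ qY rY qZ rZ hqY hrY hqZ hrZ hY hZ
  refine aux_step ν hν G Ginv f hGmono hG0 hGinv_left hGinv_right hconc hconv hf1 hDm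
    qZ rZ hqZ hrZ hZ ?_ qY rY hqY hrY hY
  intro q r hq hr ha
  rw [aux_swap, add_comm]
  refine aux_step ν hν G Ginv f hGmono hG0 hGinv_left hGinv_right hconc hconv hf1 hDm
    q r hq hr ha ?_ qZ rZ hqZ hrZ hZ
  intro q' r' hq' hr' ha'
  exact hbin q' r' q r hq' hr' hq hr ha' ha
end

section
/- Let ν ∈ (0,∞], and let G : [0,ν) → [0,∞) be strictly increasing with G(0) = 0, twice differentiable with G'(x) > 0 for all x ∈ (0,ν), and with range equal to [0,∞). Then the following are equivalent: (i) for every c > 0 the function x ↦ G⁻¹(G(x) + G(c)) is concave on [0,ν); (ii) the function u(x) = 1/G'(x) is concave on (0,ν). -/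
/-- Characterization of transforms `G` for which `x ↦ G⁻¹(G x + G c)` is concave.
Let `G : [0,ν) → [0,∞)` be strictly increasing with `G 0 = 0`, twice differentiable
with `G' > 0` on `(0,ν)`, and with range all of `[0,∞)` (with inverse `Ginv`).
Then concavity of `x ↦ G⁻¹(G x + G c)` for every `c > 0` is equivalent to
concavity of `u = 1/G'` on `(0,ν)`. -/
theorem concave_shift_iff_one_div_deriv_concave
    (ν : EReal) (hν : 0 < ν) (G Ginv G' G'' : ℝ → ℝ)
    (hGmono : StrictMonoOn G {x : ℝ | 0 ≤ x ∧ (x : EReal) < ν})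
    (hG0 : G 0 = 0)
    (hG' : ∀ x : ℝ, 0 ≤ x → (x : EReal) < ν →
      HasDerivWithinAt G (G' x) {y : ℝ | 0 ≤ y ∧ (y : EReal) < ν} x)
    (hG'' : ∀ x : ℝ, 0 ≤ x → (x : EReal) < ν →
      HasDerivWithinAt G' (G'' x) {y : ℝ | 0 ≤ y ∧ (y : EReal) < ν} x)
    (hG'pos : ∀ x : ℝ, 0 < x → (x : EReal) < ν → 0 < G' x)
    (hGrange : G '' {x : ℝ | 0 ≤ x ∧ (x : EReal) < ν} = Set.Ici 0)
    (hGinv_left : ∀ x : ℝ, 0 ≤ x → (x : EReal) < ν → Ginv (G x) = x)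
    (hGinv_right : ∀ y : ℝ, 0 ≤ y →
      G (Ginv y) = y ∧ 0 ≤ Ginv y ∧ ((Ginv y : ℝ) : EReal) < ν) :
    (∀ c : ℝ, 0 < c → (c : EReal) < ν →
        ConcaveOn ℝ {x : ℝ | 0 ≤ x ∧ (x : EReal) < ν} (fun x => Ginv (G x + G c))) ↔
      ConcaveOn ℝ {x : ℝ | 0 < x ∧ (x : EReal) < ν} (fun x => 1 / G' x) := by
  set S : Set ℝ := {x : ℝ | 0 ≤ x ∧ (x : EReal) < ν} with hS
  set D : Set ℝ := {x : ℝ | 0 < x ∧ (x : EReal) < ν} with hD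
  have hDS : D ⊆ S := fun x hx => ⟨hx.1.le, hx.2⟩
  have hlow : IsLowerSet {x : ℝ | (x : EReal) < ν} := by
    intro a b hba ha
    exact lt_of_le_of_lt (EReal.coe_le_coe_iff.2 hba) ha
  have hSc : Convex ℝ S := by
    have : S.OrdConnected := ((Set.ordConnected_Ici (a := (0:ℝ))).inter hlow.ordConnected)
    exact this.convex
  have hDc : Convex ℝ D := by
    have : D.OrdConnected := ((Set.ordConnected_Ioi (a := (0:ℝ))).inter hlow.ordConnected)
    exact this.convex
  have hDo : IsOpen D := by
    have h1 : IsOpen {x : ℝ | (x : EReal) < ν} :=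
      isOpen_Iio.preimage continuous_coe_real_ereal
    exact isOpen_Ioi.inter h1
  have hSint : interior S ⊆ D := by
    intro x hx
    have h1 : x ∈ interior (Set.Ici (0:ℝ)) := interior_mono (fun y hy => hy.1) hx
    rw [interior_Ici] at h1
    exact ⟨h1, (interior_subset hx).2⟩
  have hSn : ∀ x ∈ D, S ∈ nhds x := fun x hx => Filter.mem_of_superset (hDo.mem_nhds hx) hDS
  have h0S : (0:ℝ) ∈ S := ⟨le_rfl, by simpa using hν⟩
  have dG : ∀ x ∈ D, HasDerivAt G (G' x) x := fun x hx =>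
    (hG' x hx.1.le hx.2).hasDerivAt (hSn x hx)
  have dG' : ∀ x ∈ D, HasDerivAt G' (G'' x) x := fun x hx =>
    (hG'' x hx.1.le hx.2).hasDerivAt (hSn x hx)
  have pos : ∀ x ∈ D, 0 < G' x := fun x hx => hG'pos x hx.1 hx.2
  have Gpos : ∀ x ∈ D, 0 < G x := by
    intro x hx
    have := hGmono h0S (hDS hx) hx.1
    rwa [hG0] at this
  have Gnn : ∀ x ∈ S, 0 ≤ G x := by
    intro x hx
    have : G x ∈ Set.Ici (0:ℝ) := hGrange ▸ Set.mem_image_of_mem G hx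
    exact this
  have iD : ∀ y, 0 < y → Ginv y ∈ D := by
    intro y hy
    obtain ⟨h1, h2, h3⟩ := hGinv_right y hy.le
    refine ⟨lt_of_le_of_ne h2 ?_, h3⟩
    intro h
    rw [← h, hG0] at h1
    exact hy.ne h1
  have imono : StrictMonoOn Ginv (Set.Ioi 0) := by
    intro a ha b hb hab
    have h1 := hGinv_right a (le_of_lt ha)
    have h2 := hGinv_right b (le_of_lt hb)
    rw [← hGmono.lt_iff_lt h1.2 h2.2, h1.1, h2.1]
    exact hab
  have iimg : D ⊆ Ginv '' Set.Ioi 0 := fun x hx => ⟨G x, Gpos x hx, hGinv_left x hx.1.le hx.2⟩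
  have icont : ∀ y, 0 < y → ContinuousAt Ginv y := fun y hy =>
    imono.continuousAt_of_image_mem_nhds (Ioi_mem_nhds hy)
      (Filter.mem_of_superset (hDo.mem_nhds (iD y hy)) iimg)
  have ider : ∀ y, 0 < y → HasDerivAt Ginv (G' (Ginv y))⁻¹ y := fun y hy =>
    HasDerivAt.of_local_left_inverse (icont y hy) (dG _ (iD y hy)) (pos _ (iD y hy)).ne'
      (Filter.mem_of_superset (Ioi_mem_nhds hy) fun z hz => (hGinv_right z (le_of_lt hz)).1)
  have FD : ∀ c ∈ D, ∀ x ∈ S, Ginv (G x + G c) ∈ D := fun c hc x hx =>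
    iD _ (add_pos_of_nonneg_of_pos (Gnn x hx) (Gpos c hc))
  have dF : ∀ c ∈ D, ∀ x ∈ D, HasDerivAt (fun x => Ginv (G x + G c))
      (G' x / G' (Ginv (G x + G c))) x := by
    intro c hc x hx
    have h := (ider (G x + G c) (add_pos (Gpos x hx) (Gpos c hc))).comp x
      ((dG x hx).add_const (G c))
    rw [div_eq_inv_mul]
    exact h
  set v : ℝ → ℝ := fun x => -G'' x / (G' x)^2 with hv
  have du : ∀ x ∈ D, HasDerivAt (fun x => 1 / G' x) (v x) x := by
    intro x hx
    simpa [one_div] using (dG' x hx).fun_inv (pos x hx).ne'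
  have dp : ∀ c ∈ D, ∀ x ∈ D, HasDerivAt (fun x => G' x / G' (Ginv (G x + G c)))
      ((G' x)^2 / G' (Ginv (G x + G c)) * (v (Ginv (G x + G c)) - v x)) x := by
    intro c hc x hx
    have hF := FD c hc x (hDS hx)
    have h1 : HasDerivAt (fun x => G' (Ginv (G x + G c)))
        (G'' (Ginv (G x + G c)) * (G' x / G' (Ginv (G x + G c)))) x :=
      HasDerivAt.comp x (dG' _ hF) (dF c hc x hx)
    have h := (dG' x hx).fun_div h1 (pos _ hF).ne'
    refine h.congr_deriv ?_
    have a1 := (pos _ hF).ne'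
    have a2 := (pos _ hx).ne'
    simp only [hv]
    field_simp
    ring
  have coefpos : ∀ c ∈ D, ∀ x ∈ D, 0 < (G' x)^2 / G' (Ginv (G x + G c)) := fun c hc x hx =>
    div_pos (pow_pos (pos x hx) 2) (pos _ (FD c hc x (hDS hx)))
  constructor
  · intro H
    have hvanti : AntitoneOn v D := by
      intro x hx y hy hxy
      rcases eq_or_lt_of_le hxy with rfl | hlt
      · exact le_rfl
      have hG : 0 < G y - G x := sub_pos.2 (hGmono (hDS hx) (hDS hy) hlt)
      have hc := iD _ hG
      set c := Ginv (G y - G x) with hcdef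
      have hGc : G c = G y - G x := (hGinv_right _ hG.le).1
      have hFx : Ginv (G x + G c) = y := by
        rw [hGc, add_sub_cancel, hGinv_left y hy.1.le hy.2]
      have hconc := (H c hc.1 hc.2).subset hDS hDc
      have hanti := hconc.antitoneOn_deriv fun z hz => (dF c hc z hz).differentiableAt
      have hanti' : AntitoneOn (fun x => G' x / G' (Ginv (G x + G c))) D :=
        hanti.congr fun z hz => (dF c hc z hz).deriv
      have h1 := hanti'.derivWithin_nonpos (x := x)
      rw [(dp c hc x hx).hasDerivWithinAt.derivWithin (hDo.uniqueDiffWithinAt hx)] at h1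
      have h2 := nonpos_of_mul_nonpos_right h1 (coefpos c hc x hx)
      rw [hFx] at h2
      linarith
    refine AntitoneOn.concaveOn_of_deriv hDc
      (fun x hx => (du x hx).continuousAt.continuousWithinAt) ?_ ?_
    · rw [hDo.interior_eq]
      exact fun x hx => (du x hx).differentiableAt.differentiableWithinAt
    · rw [hDo.interior_eq]
      exact hvanti.congr fun z hz => (du z hz).deriv.symm
  · intro H c hc0 hcν
    have hc : c ∈ D := ⟨hc0, hcν⟩
    have hvanti : AntitoneOn v D :=
      (H.antitoneOn_deriv fun z hz => (du z hz).differentiableAt).congr fun z hz => (du z hz).deriv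
    refine concaveOn_of_hasDerivWithinAt2_nonpos hSc ?_
      (fun x hx => (dF c hc x (hSint hx)).hasDerivWithinAt)
      (fun x hx => (dp c hc x (hSint hx)).hasDerivWithinAt) ?_
    · intro x hx
      have h1 : ContinuousWithinAt (fun x => G x + G c) S x :=
        (hG' x hx.1 hx.2).continuousWithinAt.add continuousWithinAt_const
      exact ContinuousAt.comp_continuousWithinAt (f := fun x => G x + G c)
        (icont _ (add_pos_of_nonneg_of_pos (Gnn x hx) (Gpos c hc))) h1
    · intro x hx
      have hx := hSint hx
      have hF := FD c hc x (hDS hx)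
      refine mul_nonpos_of_nonneg_of_nonpos (coefpos c hc x hx).le (sub_nonpos.2 ?_)
      refine hvanti hx hF ?_
      have e := (hGinv_right (G x + G c) (add_pos (Gpos x hx) (Gpos c hc)).le).1
      rw [← hGmono.le_iff_le (hDS hx) (hDS hF), e]
      linarith [Gpos c hc]
end

section
/- Let (G,f) be an admissible pair, let 𝒳 and 𝒴 be finite sets, and let W be a channel from 𝒳 to 𝒴 that is permutation invariant: for every permutation π of 𝒳 there exists a permutation π' of 𝒴 such that W(π'(y)|π(x)) = W(y|x) for all x, y. Then the uniform pmf on 𝒳 maximizes the (G,f)-information: for every pmf p_X on 𝒳, I_{G,f}(uniform, W) ≥ I_{G,f}(p_X, W). -/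
open scoped BigOperators

lemma fDiv_eq_sum {Y : Type*} [Fintype Y] (f : ℝ → ℝ) (p q : Y → ℝ) (hq : IsPMF q) :
    fDiv f p q = ∑ y, q y * f (p y / q y) := by
  unfold fDiv
  refine Finset.sum_congr rfl fun y _ => ?_
  split_ifs with h
  · rfl
  · have : q y = 0 := le_antisymm (not_lt.mp h) (hq.1 y)
    simp [this]

lemma mul_div_ac {Y : Type*} (p q : Y → ℝ) (hac : AbsCont p q) (y : Y) :
    q y * (p y / q y) = p y := by
  by_cases h : q y = 0
  · simp [h, hac y h]
  · field_simp

lemma fDiv_nonneg {Y : Type*} [Fintype Y] (f : ℝ → ℝ) (p q : Y → ℝ) (hp : IsPMF p)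
    (hq : IsPMF q) (hac : AbsCont p q) (hf : ConvexOn ℝ (Set.Ici 0) f) (h1 : f 1 = 0) :
    0 ≤ fDiv f p q := by
  rw [fDiv_eq_sum f p q hq]
  have := hf.map_sum_le (t := Finset.univ) (w := q) (p := fun y => p y / q y)
    (fun y _ => hq.1 y) hq.2 (fun y _ => div_nonneg (hp.1 y) (hq.1 y))
  simp only [smul_eq_mul, mul_div_ac p q hac, hp.2, h1] at this
  exact this

lemma fDiv_le_Dm_s12 {Y : Type*} [Fintype Y] (f : ℝ → ℝ) (p q : Y → ℝ) (hp : IsPMF p)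
    (hq : IsPMF q) (hac : AbsCont p q) (hf : ConvexOn ℝ (Set.Ici 0) f) (h1 : f 1 = 0) :
    (fDiv f p q : EReal) ≤ Dm f := by
  unfold Dm
  have hle : ∀ t : {t : ℝ // 1 < t}, ((f t.1 / (t.1 - 1) : ℝ) : EReal) ≤
      ⨆ t : {t : ℝ // 1 < t}, ((f t.1 / (t.1 - 1) : ℝ) : EReal) :=
    fun t => le_iSup (fun t : {t : ℝ // 1 < t} => ((f t.1 / (t.1 - 1) : ℝ) : EReal)) t
  generalize (⨆ t : {t : ℝ // 1 < t}, ((f t.1 / (t.1 - 1) : ℝ) : EReal)) = S at hle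
  induction S using EReal.rec with
  | bot =>
    have := hle ⟨2, by norm_num⟩
    rw [le_bot_iff] at this
    exact absurd this (EReal.coe_ne_bot _)
  | top => simp
  | coe s =>
    have hs : ∀ t : ℝ, 1 < t → f t ≤ s * (t - 1) := by
      intro t ht
      have := hle ⟨t, ht⟩
      rw [EReal.coe_le_coe_iff] at this
      exact (div_le_iff₀ (by linarith)).mp this
    have h2 := hs 2 (by norm_num)
    have h0s : 0 ≤ f 0 + s := by
      have := hf.2 (show (0:ℝ) ∈ Set.Ici 0 by simp) (show (2:ℝ) ∈ Set.Ici 0 by simp)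
        (show (0:ℝ) ≤ 1/2 by norm_num) (show (0:ℝ) ≤ 1/2 by norm_num) (by norm_num)
      norm_num [h1] at this
      linarith
    have hr : ∀ r : ℝ, 0 ≤ r → f r ≤ f 0 + r * s := by
      intro r hr
      rcases lt_or_ge 1 r with h | h
      · linarith [hs r h]
      · have := hf.2 (show (0:ℝ) ∈ Set.Ici 0 by simp) (show (1:ℝ) ∈ Set.Ici 0 by simp)
          (show 0 ≤ 1 - r by linarith) hr (by ring)
        simp [h1] at this
        nlinarith
    rw [← EReal.coe_add, EReal.coe_le_coe_iff, fDiv_eq_sum f p q hq]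
    calc ∑ y, q y * f (p y / q y) ≤ ∑ y, (q y * f 0 + p y * s) := by
          refine Finset.sum_le_sum fun y _ => ?_
          have := mul_le_mul_of_nonneg_left (hr _ (div_nonneg (hp.1 y) (hq.1 y))) (hq.1 y)
          rw [mul_add, ← mul_assoc, mul_div_ac p q hac] at this
          exact this
      _ = f 0 + s := by
          rw [Finset.sum_add_distrib, ← Finset.sum_mul, ← Finset.sum_mul, hp.2, hq.2]; ring

lemma Igf_bddBelow {X Y : Type*} [Fintype X] [Fintype Y]
    (G f : ℝ → ℝ) (hGf : Admissible G f)
    (W : X → Y → ℝ) (hW : ∀ x, IsPMF (W x)) (pX : X → ℝ) (hpX : IsPMF pX) :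
    BddBelow {v : ℝ | ∃ qY : Y → ℝ, IsPMF qY ∧ (∀ x, AbsCont (W x) qY) ∧
      v = ∑ x, pX x * G (fDiv f (W x) qY)} := by
  obtain ⟨hf, h1, _, _, hG⟩ := hGf
  refine ⟨min 0 (G (Dm f).toReal), ?_⟩
  rintro v ⟨q, hq, hac, rfl⟩
  have key : ∀ x, min 0 (G (Dm f).toReal) ≤ G (fDiv f (W x) q) := by
    intro x
    rcases (fDiv_le_Dm_s12 f (W x) q (hW x) hq (hac x) hf h1).lt_or_eq with h | h
    · exact (min_le_left _ _).trans (hG _ (fDiv_nonneg f (W x) q (hW x) hq (hac x) hf h1) h)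
    · rw [← h, EReal.toReal_coe]; exact min_le_right _ _
  calc min 0 (G (Dm f).toReal) = ∑ x, pX x * min 0 (G (Dm f).toReal) := by
        rw [← Finset.sum_mul, hpX.2, one_mul]
    _ ≤ _ := Finset.sum_le_sum fun x _ => mul_le_mul_of_nonneg_left (key x) (hpX.1 x)

lemma Igf_set_nonempty {X Y : Type*} [Fintype X] [Fintype Y] [Nonempty X]
    (W : X → Y → ℝ) (hW : ∀ x, IsPMF (W x)) :
    ∃ q : Y → ℝ, IsPMF q ∧ (∀ x, AbsCont (W x) q) := by
  have hn : (0 : ℝ) < Fintype.card X := by exact_mod_cast Fintype.card_pos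
  refine ⟨fun y => (∑ x, W x y) / Fintype.card X, ⟨fun y => ?_, ?_⟩, ?_⟩
  · exact div_nonneg (Finset.sum_nonneg fun x _ => (hW x).1 y) hn.le
  · rw [← Finset.sum_div, Finset.sum_comm]
    simp [fun x => (hW x).2]
  · intro x y h
    have h' : ∑ x, W x y = 0 := by
      rcases div_eq_zero_iff.mp h with h | h
      · exact h
      · exact absurd h hn.ne'
    exact (Finset.sum_eq_zero_iff_of_nonneg fun x _ => (hW x).1 y).mp h' x (Finset.mem_univ x)

lemma sum_perm_apply {X : Type*} [Fintype X] [DecidableEq X] [Nonempty X] (p : X → ℝ)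
    (hp : ∑ x, p x = 1) (x : X) :
    ∑ π : Equiv.Perm X, p (π x) =
      (Fintype.card (Equiv.Perm X) : ℝ) * (1 / (Fintype.card X : ℝ)) := by
  have hn : (0 : ℝ) < Fintype.card X := by exact_mod_cast Fintype.card_pos
  have hc : ∀ z, ∑ π : Equiv.Perm X, p (π z) = ∑ π : Equiv.Perm X, p (π x) := by
    intro z
    refine Fintype.sum_equiv (Equiv.mulRight (Equiv.swap x z)) _ _ fun π => ?_
    simp
  have h2 : ∑ z, ∑ π : Equiv.Perm X, p (π z) = (Fintype.card (Equiv.Perm X) : ℝ) := by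
    rw [Finset.sum_comm]
    simp only [Equiv.sum_comp _ p, hp]
    simp
  simp only [hc, Finset.sum_const, Finset.card_univ, nsmul_eq_mul] at h2
  rw [← h2]
  field_simp

/-- For a permutation-invariant channel `W`, the uniform input distribution
maximizes the `(G,f)`-information. -/
theorem Igf_uniform_maximizes_of_perm_invariant
    {X Y : Type*} [Fintype X] [Fintype Y] [Nonempty X]
    (G f : ℝ → ℝ) (hGf : Admissible G f)
    (W : X → Y → ℝ) (hW : ∀ x, IsPMF (W x))
    (hperm : ∀ π : Equiv.Perm X, ∃ π' : Equiv.Perm Y, ∀ x y, W (π x) (π' y) = W x y)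
    (pX : X → ℝ) (hpX : IsPMF pX) :
    Igf G f pX W ≤ Igf G f (fun _ => 1 / (Fintype.card X : ℝ)) W := by
  classical
  have hN : (0 : ℝ) < Fintype.card (Equiv.Perm X) := by exact_mod_cast Fintype.card_pos
  have hbd := Igf_bddBelow G f hGf W hW pX hpX
  obtain ⟨q₀, hq₀, hac₀⟩ := Igf_set_nonempty W hW
  unfold Igf
  refine le_csInf ⟨_, q₀, hq₀, hac₀, rfl⟩ ?_
  rintro v ⟨q, hq, hac, rfl⟩
  have step : ∀ π : Equiv.Perm X,
      sInf {v : ℝ | ∃ qY : Y → ℝ, IsPMF qY ∧ (∀ x, AbsCont (W x) qY) ∧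
        v = ∑ x, pX x * G (fDiv f (W x) qY)} ≤ ∑ x, pX (π x) * G (fDiv f (W x) q) := by
    intro π
    obtain ⟨π', hπ⟩ := hperm π
    refine csInf_le hbd ⟨fun y => q (π'.symm y), ⟨fun y => hq.1 _, ?_⟩, ?_, ?_⟩
    · rw [Equiv.sum_comp π'.symm q]; exact hq.2
    · intro x y h
      have := hac (π.symm x) (π'.symm y) h
      rw [← hπ] at this
      simpa using this
    · rw [← Equiv.sum_comp π (fun x => pX x * G (fDiv f (W x) fun y => q (π'.symm y)))]
      refine Finset.sum_congr rfl fun x _ => ?_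
      congr 2
      unfold fDiv
      refine Fintype.sum_equiv π' _ _ fun y => ?_
      simp [hπ]
  have tot := Finset.sum_le_sum fun π (_ : π ∈ (Finset.univ : Finset (Equiv.Perm X))) => step π
  rw [Finset.sum_comm] at tot
  simp only [← Finset.sum_mul, sum_perm_apply pX hpX.2, Finset.sum_const, Finset.card_univ,
    nsmul_eq_mul, mul_assoc] at tot
  rw [← Finset.mul_sum] at tot
  exact le_of_mul_le_mul_left tot hN
end

section
/- Let f : [0,∞) → ℝ be a four times continuously differentiable convex function with f(1) = 1 such that g(x) = x²·f''(x) belongs to 𝒯⁺, and suppose there exist c > 0 and s > 1 with f(x) ≥ c·x^s for all x ≥ 0. Then for every finite set 𝒳 and all pmfs p, q on 𝒳 with p ≪ q, ∑_{x : q(x)>0} q(x) f(p(x)/q(x)) ≥ exp( (s−1) · D_KL(p‖q) ), where D_KL(p‖q) = ∑_{x : p(x)>0} p(x) log(p(x)/q(x)). -/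
open scoped BigOperators

/-- The Kullback--Leibler divergence `D_KL(p‖q) = ∑_{x : p(x)>0} p(x) log(p(x)/q(x))`. -/
noncomputable def klDiv {X : Type*} [Fintype X] (p q : X → ℝ) : ℝ :=
  ∑ x, if 0 < p x then p x * Real.log (p x / q x) else 0

lemma aux_submul
    (f f' f'' g g' g'' : ℝ → ℝ)
    (hf' : ∀ x ∈ Set.Ici (0 : ℝ), HasDerivWithinAt f (f' x) (Set.Ici 0) x)
    (hf'' : ∀ x ∈ Set.Ici (0 : ℝ), HasDerivWithinAt f' (f'' x) (Set.Ici 0) x)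
    (hf1 : f 1 = 1)
    (hg : ∀ x : ℝ, g x = x ^ 2 * f'' x)
    (hg' : ∀ x ∈ Set.Ici (0 : ℝ), HasDerivWithinAt g (g' x) (Set.Ici 0) x)
    (hg'' : ∀ x ∈ Set.Ici (0 : ℝ), HasDerivWithinAt g' (g'' x) (Set.Ici 0) x)
    (hTplus : ∀ x ∈ Set.Ici (0 : ℝ), ∀ α : ℝ, 0 < α →
      x ^ 2 * g'' x - g α * g (x / α) ≤ 0)
    {ι κ : Type} [Fintype ι] [Fintype κ] (b Y : ι → ℝ) (a X : κ → ℝ)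
    (hb : ∀ i, 0 ≤ b i) (hY : ∀ i, 0 ≤ Y i) (hb1 : ∑ i, b i = 1) (hbY : ∑ i, b i * Y i = 1)
    (ha : ∀ i, 0 ≤ a i) (hX : ∀ i, 0 ≤ X i) (ha1 : ∑ i, a i = 1) (haX : ∑ i, a i * X i = 1) :
    ∑ z : ι × κ, (b z.1 * a z.2) * f (Y z.1 * X z.2) ≤
      (∑ i, b i * f (Y i)) * ∑ k, a k * f (X k) := by
  have comp : ∀ (u u' : ℝ → ℝ) (t : ℝ), 0 ≤ t →
      (∀ x ∈ Set.Ici (0 : ℝ), HasDerivWithinAt u (u' x) (Set.Ici 0) x) →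
      ∀ x ∈ Set.Ici (0 : ℝ), HasDerivWithinAt (fun x => u (x * t)) (u' (x * t) * t) (Set.Ici 0) x := by
    intro u u' t ht hu x hx
    have h1 : HasDerivWithinAt (fun x : ℝ => x * t) t (Set.Ici 0) x := by
      simpa using (hasDerivWithinAt_id x (Set.Ici (0:ℝ))).mul_const t
    exact (hu (x * t) (mul_nonneg hx ht)).comp x h1 (fun y hy => mul_nonneg hy ht)
  -- inner convexity
  have kconv : ∀ x : ℝ, 0 < x →
      ConvexOn ℝ (Set.Ici 0) (fun y => f'' x * f y - g (y * x) / x ^ 2) := by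
    intro x hx
    have d1 : ∀ y ∈ Set.Ici (0:ℝ), HasDerivWithinAt (fun y => f'' x * f y - g (y * x) / x ^ 2)
        (f'' x * f' y - g' (y * x) * x / x ^ 2) (Set.Ici 0) y := fun y hy =>
      ((hf' y hy).const_mul _).sub ((comp g g' x hx.le hg' y hy).div_const _)
    have d2 : ∀ y ∈ Set.Ici (0:ℝ), HasDerivWithinAt
        (fun y => f'' x * f' y - g' (y * x) * x / x ^ 2)
        (f'' x * f'' y - g'' (y * x) * x * x / x ^ 2) (Set.Ici 0) y := fun y hy =>
      ((hf'' y hy).const_mul _).sub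
        (((comp g' g'' x hx.le hg'' y hy).mul_const x).div_const _)
    refine convexOn_of_hasDerivWithinAt2_nonneg (convex_Ici 0)
      (fun y hy => (d1 y hy).continuousWithinAt)
      (fun y hy => (d1 y (interior_subset hy)).mono interior_subset)
      (fun y hy => (d2 y (interior_subset hy)).mono interior_subset) ?_
    intro y hy
    rw [interior_Ici] at hy
    have hy : 0 < y := hy
    have h := hTplus (y * x) (mul_pos hy hx).le x hx
    rw [mul_div_cancel_right₀ _ hx.ne', hg x, hg y] at h
    have e : g'' (y * x) * x * x / x ^ 2 = g'' (y * x) := by field_simp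
    rw [e]
    have hp : 0 < (y * x) ^ 2 := by positivity
    by_contra hcon
    push Not at hcon
    nlinarith [mul_neg_of_pos_of_neg hp hcon]
  -- outer convexity
  have Hconv : ConvexOn ℝ (Set.Ici 0)
      (fun x => ∑ i, b i * (f x * f (Y i) - f (x * Y i))) := by
    have d1 : ∀ x ∈ Set.Ici (0:ℝ), HasDerivWithinAt
        (fun x => ∑ i, b i * (f x * f (Y i) - f (x * Y i)))
        (∑ i, b i * (f' x * f (Y i) - f' (x * Y i) * Y i)) (Set.Ici 0) x := fun x hx =>
      HasDerivWithinAt.fun_sum fun i _ =>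
        (((hf' x hx).mul_const _).sub (comp f f' (Y i) (hY i) hf' x hx)).const_mul _
    have d2 : ∀ x ∈ Set.Ici (0:ℝ), HasDerivWithinAt
        (fun x => ∑ i, b i * (f' x * f (Y i) - f' (x * Y i) * Y i))
        (∑ i, b i * (f'' x * f (Y i) - f'' (x * Y i) * Y i * Y i)) (Set.Ici 0) x := fun x hx =>
      HasDerivWithinAt.fun_sum fun i _ =>
        (((hf'' x hx).mul_const _).sub
          ((comp f' f'' (Y i) (hY i) hf'' x hx).mul_const _)).const_mul _
    refine convexOn_of_hasDerivWithinAt2_nonneg (convex_Ici 0)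
      (fun y hy => (d1 y hy).continuousWithinAt)
      (fun y hy => (d1 y (interior_subset hy)).mono interior_subset)
      (fun y hy => (d2 y (interior_subset hy)).mono interior_subset) ?_
    intro x hx
    rw [interior_Ici] at hx
    have hx : 0 < x := hx
    have h := (kconv x hx).map_sum_le (t := Finset.univ) (w := b) (p := Y)
      (fun i _ => hb i) hb1 (fun i _ => hY i)
    simp only [smul_eq_mul] at h
    rw [hbY, hf1, one_mul, hg x] at h
    have e0 : f'' x * 1 - x ^ 2 * f'' x / x ^ 2 = 0 := by field_simp; ring
    rw [e0] at h
    refine h.trans (le_of_eq (Finset.sum_congr rfl fun i _ => ?_))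
    rw [hg, mul_comm (Y i) x]
    field_simp
  have h := Hconv.map_sum_le (t := Finset.univ) (w := a) (p := X)
      (fun i _ => ha i) ha1 (fun i _ => hX i)
  simp only [smul_eq_mul] at h
  rw [haX] at h
  simp only [hf1, one_mul, sub_self, mul_zero, Finset.sum_const_zero] at h
  have e : ∑ k, a k * ∑ i, b i * (f (X k) * f (Y i) - f (X k * Y i)) =
      (∑ i, b i * f (Y i)) * (∑ k, a k * f (X k)) -
        ∑ z : ι × κ, (b z.1 * a z.2) * f (Y z.1 * X z.2) := by
    rw [Fintype.sum_prod_type_right, mul_comm, Finset.sum_mul, ← Finset.sum_sub_distrib]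
    refine Finset.sum_congr rfl fun k _ => ?_
    rw [Finset.mul_sum, Finset.mul_sum, ← Finset.sum_sub_distrib]
    refine Finset.sum_congr rfl fun i _ => ?_
    simp only [mul_comm (X k) (Y i)]
    ring
  linarith

/-- Comparison with KL divergence for the `log(1+x)` transform: if `f` is a four times
continuously differentiable convex function with `f 1 = 1`, `g x = x² f''(x) ∈ 𝒯⁺`,
and `f x ≥ c xˢ` for some `c > 0`, `s > 1`, then for all pmfs `p ≪ q`,
`Σ_f(p‖q) ≥ exp((s−1) D_KL(p‖q))`. -/
theorem fDiv_ge_exp_klDiv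
    (f f' f'' f3 f4 g g' g'' : ℝ → ℝ) (c s : ℝ)
    (hf' : ∀ x ∈ Set.Ici (0 : ℝ), HasDerivWithinAt f (f' x) (Set.Ici 0) x)
    (hf'' : ∀ x ∈ Set.Ici (0 : ℝ), HasDerivWithinAt f' (f'' x) (Set.Ici 0) x)
    (hf3 : ∀ x ∈ Set.Ici (0 : ℝ), HasDerivWithinAt f'' (f3 x) (Set.Ici 0) x)
    (hf4 : ∀ x ∈ Set.Ici (0 : ℝ), HasDerivWithinAt f3 (f4 x) (Set.Ici 0) x)
    (hf4cont : ContinuousOn f4 (Set.Ici 0))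
    (hconv : ConvexOn ℝ (Set.Ici 0) f) (hf1 : f 1 = 1)
    (hg : ∀ x : ℝ, g x = x ^ 2 * f'' x)
    (hg' : ∀ x ∈ Set.Ici (0 : ℝ), HasDerivWithinAt g (g' x) (Set.Ici 0) x)
    (hg'' : ∀ x ∈ Set.Ici (0 : ℝ), HasDerivWithinAt g' (g'' x) (Set.Ici 0) x)
    (hg_nonneg : ∀ x ∈ Set.Ici (0 : ℝ), 0 ≤ g x)
    (hTplus : ∀ x ∈ Set.Ici (0 : ℝ), ∀ α : ℝ, 0 < α →
      x ^ 2 * g'' x - g α * g (x / α) ≤ 0)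
    (hc : 0 < c) (hs : 1 < s)
    (hlow : ∀ x : ℝ, 0 ≤ x → c * x ^ s ≤ f x) :
    ∀ (𝒳 : Type) [Fintype 𝒳] (p q : 𝒳 → ℝ),
      IsPMF p → IsPMF q → AbsCont p q →
      Real.exp ((s - 1) * klDiv p q) ≤ fDiv f p q := by
  intro 𝒳 _ p q hp hq hpq
  set X : 𝒳 → ℝ := fun x => p x / q x with hXdef
  have hX : ∀ i, 0 ≤ X i := fun i => div_nonneg (hp.1 i) (hq.1 i)
  have hqX : ∀ i, q i * X i = p i := by
    intro i
    by_cases h : q i = 0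
    · simp [h, hpq i h]
    · simp only [hXdef]; field_simp
  have hF : fDiv f p q = ∑ i, q i * f (X i) := by
    refine Finset.sum_congr rfl fun i _ => ?_
    split_ifs with h
    · rfl
    · rw [le_antisymm (not_lt.1 h) (hq.1 i), zero_mul]
  have hM : Real.exp ((s - 1) * klDiv p q) ≤ ∑ i, q i * X i ^ s := by
    have h := convexOn_exp.map_sum_le (t := Finset.univ) (w := p)
      (p := fun i => (s - 1) * Real.log (X i))
      (fun i _ => hp.1 i) hp.2 (fun i _ => Set.mem_univ _)
    simp only [smul_eq_mul] at h
    have e1 : (s - 1) * klDiv p q = ∑ i, p i * ((s - 1) * Real.log (X i)) := by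
      rw [klDiv, Finset.mul_sum]
      refine Finset.sum_congr rfl fun i _ => ?_
      split_ifs with h
      · simp only [hXdef]; ring
      · rw [le_antisymm (not_lt.1 h) (hp.1 i)]; ring
    rw [e1]
    refine h.trans (Finset.sum_le_sum fun i _ => ?_)
    rcases (hX i).eq_or_lt with h0 | h0
    · have : p i = 0 := by rw [← hqX i, ← h0, mul_zero]
      rw [this, zero_mul]
      exact mul_nonneg (hq.1 i) (Real.rpow_nonneg (hX i) _)
    · rw [mul_comm (s - 1), ← Real.rpow_def_of_pos h0, ← hqX i, mul_assoc,
        Real.rpow_sub_one h0.ne', mul_div_cancel₀ _ h0.ne']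
  rw [hF]
  refine hM.trans ?_
  set M := ∑ i, q i * X i ^ s with hMdef
  set F := ∑ i, q i * f (X i) with hFdef
  have hMpos : 0 < M := (Real.exp_pos _).trans_le hM
  have hF0 : 0 ≤ F := Finset.sum_nonneg fun i _ => mul_nonneg (hq.1 i)
    ((mul_nonneg hc.le (Real.rpow_nonneg (hX i) _)).trans (hlow _ (hX i)))
  have key : ∀ n : ℕ, ∃ (ι : Type) (_ : Fintype ι) (b Y : ι → ℝ),
      (∀ i, 0 ≤ b i) ∧ (∀ i, 0 ≤ Y i) ∧ ∑ i, b i = 1 ∧ ∑ i, b i * Y i = 1 ∧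
      ∑ i, b i * Y i ^ s = M ^ n ∧ ∑ i, b i * f (Y i) ≤ F ^ n := by
    intro n
    induction n with
    | zero =>
      refine ⟨Unit, inferInstance, fun _ => 1, fun _ => 1, ?_⟩
      simp [hf1]
    | succ n ih =>
      obtain ⟨ι, _, b, Y, hb, hY, hb1, hbY, hbM, hbF⟩ := ih
      refine ⟨ι × 𝒳, inferInstance, fun z => b z.1 * q z.2, fun z => Y z.1 * X z.2,
        fun z => mul_nonneg (hb _) (hq.1 _), fun z => mul_nonneg (hY _) (hX _), ?_, ?_, ?_, ?_⟩
      · rw [Fintype.sum_prod_type, ← Fintype.sum_mul_sum, hb1, hq.2, one_mul]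
      · have : ∑ i, q i * X i = 1 := by simp only [hqX, hp.2]
        calc _ = ∑ z : ι × 𝒳, (b z.1 * Y z.1) * (q z.2 * X z.2) :=
              Finset.sum_congr rfl fun z _ => by ring
          _ = _ := by
            rw [Fintype.sum_prod_type]; dsimp only; rw [← Fintype.sum_mul_sum, hbY, this, one_mul]
      · calc _ = ∑ z : ι × 𝒳, (b z.1 * Y z.1 ^ s) * (q z.2 * X z.2 ^ s) :=
              Finset.sum_congr rfl fun z _ => by
                rw [Real.mul_rpow (hY _) (hX _)]; ring
          _ = _ := by
            rw [Fintype.sum_prod_type]; dsimp only; rw [← Fintype.sum_mul_sum, hbM, pow_succ]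
      · have := aux_submul f f' f'' g g' g'' hf' hf'' hf1 hg hg' hg'' hTplus b Y q X
          hb hY hb1 hbY hq.1 hX hq.2 (by simp only [hqX, hp.2])
        rw [pow_succ]
        exact this.trans (mul_le_mul_of_nonneg_right hbF hF0)
  have key2 : ∀ n : ℕ, c * M ^ n ≤ F ^ n := by
    intro n
    obtain ⟨ι, _, b, Y, hb, hY, hb1, hbY, hbM, hbF⟩ := key n
    rw [← hbM]
    refine le_trans ?_ hbF
    rw [Finset.mul_sum]
    refine Finset.sum_le_sum fun i _ => ?_
    nlinarith [mul_le_mul_of_nonneg_left (hlow _ (hY i)) (hb i)]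
  by_contra hcon
  push Not at hcon
  obtain ⟨n, hn⟩ := exists_pow_lt_of_lt_one hc ((div_lt_one hMpos).2 hcon)
  rw [div_pow, div_lt_iff₀ (pow_pos hMpos n)] at hn
  exact absurd (key2 n) (not_le.2 hn)
end

section
/- Let g : (0,∞) → [0,∞) be a nonnegative, twice differentiable function satisfying the functional-differential equation x²·g''(x) = g(α)·g(x/α) for all x > 0 and α > 0. Then there exists γ ∈ ℝ with γ ≥ 1 or γ ≤ 0 such that g(x) = γ(γ−1)·x^γ for all x > 0. -/
/-- The only nonnegative solutions of the functional-differential equation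
`x² g''(x) = g(α) g(x/α)` (for all `x, α > 0`) are `g(x) = γ(γ−1) x^γ`
with `γ ≥ 1` or `γ ≤ 0`. -/
theorem functional_equation_solution
    (g g' g'' : ℝ → ℝ)
    (hg_nonneg : ∀ x : ℝ, 0 < x → 0 ≤ g x)
    (hg' : ∀ x : ℝ, 0 < x → HasDerivAt g (g' x) x)
    (hg'' : ∀ x : ℝ, 0 < x → HasDerivAt g' (g'' x) x)
    (heq : ∀ x : ℝ, 0 < x → ∀ α : ℝ, 0 < α → x ^ 2 * g'' x = g α * g (x / α)) :
    ∃ γ : ℝ, (1 ≤ γ ∨ γ ≤ 0) ∧ ∀ x : ℝ, 0 < x → g x = γ * (γ - 1) * x ^ γ := by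
  have hmul : ∀ a, 0 < a → ∀ b, 0 < b → g a * g b = g 1 * g (a * b) := by
    intro a ha b hb
    have h1 := heq (a * b) (mul_pos ha hb) a ha
    have h2 := heq (a * b) (mul_pos ha hb) 1 one_pos
    rw [mul_div_cancel_left₀ b ha.ne'] at h1
    rw [div_one] at h2
    rw [← h1, h2]
  by_cases hc : g 1 = 0
  · refine ⟨0, Or.inr le_rfl, fun x hx => ?_⟩
    have h := hmul x hx x hx
    rw [hc, zero_mul] at h
    have : g x = 0 := mul_self_eq_zero.mp h
    simp [this]
  have hcpos : 0 < g 1 := lt_of_le_of_ne (hg_nonneg 1 one_pos) (Ne.symm hc)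
  obtain ⟨γ, hγ⟩ : ∃ γ, γ = g' 1 / g 1 := ⟨_, rfl⟩
  have hode : ∀ x, 0 < x → x * g' x = γ * g x := by
    intro x hx
    have hA : HasDerivAt (fun a => g 1 * g (a * x)) (g 1 * (g' x * x)) 1 := by
      have h1 : HasDerivAt (fun a : ℝ => a * x) x 1 := by
        simpa using (hasDerivAt_id (1 : ℝ)).mul_const x
      have h2 : HasDerivAt g (g' x) (1 * x) := by simpa using hg' x hx
      exact (HasDerivAt.comp (1 : ℝ) h2 h1).const_mul (g 1)
    have hB : HasDerivAt (fun a => g a * g x) (g' 1 * g x) 1 := (hg' 1 one_pos).mul_const (g x)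
    have hev : (fun a => g 1 * g (a * x)) =ᶠ[nhds 1] (fun a => g a * g x) := by
      filter_upwards [lt_mem_nhds (one_pos : (0 : ℝ) < 1)] with a ha
      exact (hmul a ha x hx).symm
    have h := hA.unique (hB.congr_of_eventuallyEq hev)
    rw [hγ]
    field_simp
    linarith
  have hcγ : g 1 = γ * (γ - 1) := by
    have hA : HasDerivAt (fun x => x * g' x) (1 * g' 1 + 1 * g'' 1) 1 :=
      (hasDerivAt_id (1 : ℝ)).mul (hg'' 1 one_pos)
    have hB : HasDerivAt (fun x => γ * g x) (γ * g' 1) 1 := (hg' 1 one_pos).const_mul γ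
    have hev : (fun x => x * g' x) =ᶠ[nhds 1] (fun x => γ * g x) := by
      filter_upwards [lt_mem_nhds (one_pos : (0 : ℝ) < 1)] with a ha
      exact hode a ha
    have h := hA.unique (hB.congr_of_eventuallyEq hev)
    have h1 := hode 1 one_pos
    have h2 := heq 1 one_pos 1 one_pos
    rw [div_one] at h2
    apply mul_left_cancel₀ hc
    linear_combination -h2 + h + (γ - 1) * h1
  have hsol : ∀ x, 0 < x → g x = g 1 * x ^ γ := by
    have hd : ∀ x ∈ Set.Ioi (0 : ℝ), HasDerivAt (fun x => g x * x ^ (-γ)) 0 x := by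
      intro x hx
      have hx : 0 < x := hx
      have h := (hg' x hx).mul (Real.hasDerivAt_rpow_const (p := -γ) (Or.inl hx.ne'))
      refine HasDerivAt.congr_deriv (f := fun x => g x * x ^ (-γ)) h ?_
      have h3 : x ^ (-γ) = x * x ^ (-γ - 1) := by
        rw [Real.rpow_sub_one hx.ne']; field_simp
      rw [h3]
      linear_combination (x ^ (-γ - 1)) * hode x hx
    intro x hx
    have h := (convex_Ioi (0 : ℝ)).is_const_of_fderivWithin_eq_zero (𝕜 := ℝ)
      (f := fun x => g x * x ^ (-γ))
      (fun y hy => (hd y hy).differentiableAt.differentiableWithinAt)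
      (fun y hy => by
        rw [fderivWithin_of_isOpen isOpen_Ioi hy]
        ext; simpa using (hd y hy).deriv)
      (show x ∈ Set.Ioi 0 from Set.mem_Ioi.mpr hx) (show (1 : ℝ) ∈ Set.Ioi 0 from Set.mem_Ioi.mpr one_pos)
    simp only [Real.one_rpow, mul_one] at h
    rw [← h, mul_assoc, ← Real.rpow_add hx]
    simp
  refine ⟨γ, ?_, fun x hx => ?_⟩
  · by_contra hcon
    push Not at hcon
    nlinarith [hcon.1, hcon.2]
  · rw [hsol x hx, hcγ]
end

section
/- Let β ≥ 0 and let Q : [0,∞) → [0,∞) be a nonnegative, twice differentiable function satisfying x·Q''(x) + β·Q'(x) ≤ 0 for all x > 0. Then: if 0 ≤ β < 1, Q is non-decreasing on (0,∞); if β > 1, Q is non-increasing on (0,∞); and if β = 1, Q is constant on (0,∞). -/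
/-- Monotonicity from the differential inequality `x Q''(x) + β Q'(x) ≤ 0` for a
nonnegative `Q` on `[0,∞)`: if `0 ≤ β < 1` then `Q` is non-decreasing on `(0,∞)`,
if `β > 1` then `Q` is non-increasing on `(0,∞)`, and if `β = 1` then `Q` is
constant on `(0,∞)`. -/
theorem monotonicity_from_differential_inequality
    (β : ℝ) (hβ : 0 ≤ β) (Q Q' Q'' : ℝ → ℝ)
    (hQ_nonneg : ∀ x : ℝ, 0 ≤ x → 0 ≤ Q x)
    (hQ' : ∀ x ∈ Set.Ici (0 : ℝ), HasDerivWithinAt Q (Q' x) (Set.Ici 0) x)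
    (hQ'' : ∀ x ∈ Set.Ici (0 : ℝ), HasDerivWithinAt Q' (Q'' x) (Set.Ici 0) x)
    (hineq : ∀ x : ℝ, 0 < x → x * Q'' x + β * Q' x ≤ 0) :
    (β < 1 → MonotoneOn Q (Set.Ioi 0)) ∧
    (1 < β → AntitoneOn Q (Set.Ioi 0)) ∧
    (β = 1 → ∀ x ∈ Set.Ioi (0 : ℝ), ∀ y ∈ Set.Ioi (0 : ℝ), Q x = Q y) := by
  have hd : ∀ x : ℝ, 0 < x → HasDerivAt Q (Q' x) x := fun x hx =>
    (hQ' x hx.le).hasDerivAt (Ici_mem_nhds hx)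
  have hd2 : ∀ x : ℝ, 0 < x → HasDerivAt Q' (Q'' x) x := fun x hx =>
    (hQ'' x hx.le).hasDerivAt (Ici_mem_nhds hx)
  have hP : AntitoneOn (fun x : ℝ => x ^ β * Q' x) (Set.Ici 0) := by
    have hder : ∀ x : ℝ, 0 < x → HasDerivAt (fun x : ℝ => x ^ β * Q' x)
        (β * x ^ (β - 1) * Q' x + x ^ β * Q'' x) x := fun x hx =>
      (Real.hasDerivAt_rpow_const (Or.inl hx.ne')).mul (hd2 x hx)
    apply antitoneOn_of_deriv_nonpos (convex_Ici 0)
    · exact (Real.continuous_rpow_const hβ).continuousOn.mul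
        (fun x hx => (hQ'' x hx).continuousWithinAt)
    · intro x hx
      rw [interior_Ici] at hx
      exact (hder x hx).differentiableAt.differentiableWithinAt
    · intro x hx
      rw [interior_Ici] at hx
      have hx : 0 < x := hx
      rw [(hder x hx).deriv]
      have h1 : x ^ β = x ^ (β - 1) * x := by
        rw [← Real.rpow_add_one hx.ne', sub_add_cancel]
      have h2 : 0 < x ^ (β - 1) := Real.rpow_pos_of_pos hx _
      rw [h1]
      nlinarith [mul_nonneg h2.le (sub_nonneg.2 (hineq x hx))]
  have hneg : 0 < β → ∀ x : ℝ, 0 < x → Q' x ≤ 0 := by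
    intro hb x hx
    have h := hP (Set.mem_Ici.2 le_rfl) (Set.mem_Ici.2 hx.le) hx.le
    simp only [Real.zero_rpow hb.ne', zero_mul] at h
    exact nonpos_of_mul_nonpos_right h (Real.rpow_pos_of_pos hx _)
  have hpos : β ≤ 1 → ∀ x : ℝ, 0 < x → 0 ≤ Q' x := by
    intro hb a ha
    by_contra! hlt
    have hbd : ∀ x : ℝ, a ≤ x → Q' x + -(a * Q' a) * x⁻¹ ≤ 0 := by
      intro x hx
      have hx0 : 0 < x := ha.trans_le hx
      have h := hP (Set.mem_Ici.2 ha.le) (Set.mem_Ici.2 hx0.le) hx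
      simp only at h
      have e : ∀ y : ℝ, 0 < y → y = y ^ (1 - β) * y ^ β := fun y hy => by
        rw [← Real.rpow_add hy]; simp
      have h3 : a ^ (1 - β) ≤ x ^ (1 - β) := Real.rpow_le_rpow ha.le hx (by linarith)
      have h4 : a ^ β * Q' a ≤ 0 :=
        mul_nonpos_of_nonneg_of_nonpos (Real.rpow_pos_of_pos ha _).le hlt.le
      have h5 : x * Q' x ≤ a * Q' a := by
        calc x * Q' x = x ^ (1 - β) * (x ^ β * Q' x) := by rw [← mul_assoc, ← e x hx0]
          _ ≤ x ^ (1 - β) * (a ^ β * Q' a) :=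
            mul_le_mul_of_nonneg_left h (Real.rpow_pos_of_pos hx0 _).le
          _ ≤ a ^ (1 - β) * (a ^ β * Q' a) := mul_le_mul_of_nonpos_right h3 h4
          _ = a * Q' a := by rw [← mul_assoc, ← e a ha]
      have h6 : Q' x + -(a * Q' a) * x⁻¹ = (x * Q' x - a * Q' a) * x⁻¹ := by
        field_simp
        ring
      rw [h6]
      exact mul_nonpos_of_nonpos_of_nonneg (by linarith) (inv_pos.2 hx0).le
    have hc : 0 < -(a * Q' a) := by nlinarith
    have hder : ∀ x : ℝ, a ≤ x → HasDerivAt (fun x => Q x + -(a * Q' a) * Real.log x)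
        (Q' x + -(a * Q' a) * x⁻¹) x := fun x hx =>
      (hd x (ha.trans_le hx)).add ((Real.hasDerivAt_log (ha.trans_le hx).ne').const_mul _)
    have hanti : AntitoneOn (fun x => Q x + -(a * Q' a) * Real.log x) (Set.Ici a) := by
      apply antitoneOn_of_deriv_nonpos (convex_Ici a)
      · exact fun x hx => (hder x hx).continuousAt.continuousWithinAt
      · intro x hx
        exact (hder x (interior_subset hx)).differentiableAt.differentiableWithinAt
      · intro x hx
        rw [(hder x (interior_subset hx)).deriv]
        exact hbd x (interior_subset hx)
    have ht : Filter.Tendsto (fun x => -(a * Q' a) * Real.log x) Filter.atTop Filter.atTop :=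
      Real.tendsto_log_atTop.const_mul_atTop hc
    obtain ⟨x, h1, h2⟩ := ((ht.eventually_gt_atTop
      (Q a + -(a * Q' a) * Real.log a)).and (Filter.eventually_ge_atTop a)).exists
    have h3 := hanti (Set.mem_Ici.2 le_rfl) (Set.mem_Ici.2 h2) h2
    simp only at h3
    linarith [hQ_nonneg x (ha.le.trans h2)]
  have hcont : ContinuousOn Q (Set.Ioi 0) :=
    fun x hx => (hd x hx).continuousAt.continuousWithinAt
  have hdiff : DifferentiableOn ℝ Q (interior (Set.Ioi 0)) := fun x hx =>
    (hd x (interior_subset hx)).differentiableAt.differentiableWithinAt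
  have hmono : β ≤ 1 → MonotoneOn Q (Set.Ioi 0) := fun hb =>
    monotoneOn_of_deriv_nonneg (convex_Ioi 0) hcont hdiff (fun x hx => by
      rw [(hd x (interior_subset hx)).deriv]
      exact hpos hb x (interior_subset hx))
  have hant : 0 < β → AntitoneOn Q (Set.Ioi 0) := fun hb =>
    antitoneOn_of_deriv_nonpos (convex_Ioi 0) hcont hdiff (fun x hx => by
      rw [(hd x (interior_subset hx)).deriv]
      exact hneg hb x (interior_subset hx))
  refine ⟨fun h => hmono h.le, fun h => hant (by linarith), fun h x hx y hy => ?_⟩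
  have m := hmono h.le
  have n := hant (by linarith)
  rcases le_total x y with hxy | hxy
  · exact le_antisymm (m hx hy hxy) (n hx hy hxy)
  · exact le_antisymm (n hy hx hxy) (m hy hx hxy)
end
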